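/- arXiv:0705.3424 — 2 statements merged into one kernel-verified Lean document; each statement's English description precedes it below -/
import Mathlib

section
/- Suppose G is a countably infinite amenable group and the action of G on X is free with respect to μ, meaning that for every s ∈ G ∖ {e} the set {x ∈ X : sx = x} has μ-measure zero. Then for every finite Borel cover 𝒰 of X one has h_μ⁺(𝒰) ≤ h̲_{c,μ}(𝒰). -/
open MeasureTheory Set
open scoped Classical ENNReal

/-- `F` is a nonempty `(K,δ)`-invariant finite subset of the group `G`. -/
def FolnerInv {G : Type*} [Group G] (K : Finset G) (δ : ℝ) (F : Finset G) : Prop :=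
  F.Nonempty ∧
    (1 - δ) * (F.card : ℝ) ≤ (((F : Set G)) ∩ {s : G | ∀ g ∈ K, g * s ∈ F}).ncard

/-- The Følner characterisation of amenability for a discrete group `G`. -/
def FolnerAmenable (G : Type*) [Group G] : Prop :=
  ∀ (K : Finset G) (δ : ℝ), 0 < δ → ∃ F : Finset G, FolnerInv K δ F

/-- The limit supremum of `ψ F / |F|` as `F` becomes more and more invariant. -/
noncomputable def invLimsup {G : Type*} [Group G] (ψ : Finset G → ℝ) : ℝ :=
  ⨅ (K : Finset G) (δ : {d : ℝ // 0 < d}),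
    sSup ((fun F : Finset G => ψ F / (F.card : ℝ)) '' {F : Finset G | FolnerInv K δ.1 F})

/-- The limit infimum of `ψ F / |F|` as `F` becomes more and more invariant. -/
noncomputable def invLiminf {G : Type*} [Group G] (ψ : Finset G → ℝ) : ℝ :=
  ⨆ (K : Finset G) (δ : {d : ℝ // 0 < d}),
    sInf ((fun F : Finset G => ψ F / (F.card : ℝ)) '' {F : Finset G | FolnerInv K δ.1 F})

/-- `J ⊆ G` is an independence set for the tuple `A` of subsets of `X` relative to the
map `D : G → Set X`. -/
def IndepRel {G X : Type*} [Group G] [MulAction G X] {k : ℕ} (A : Fin k → Set X)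
    (D : G → Set X) (J : Set G) : Prop :=
  ∀ F : Finset G, (F : Set G) ⊆ J → F.Nonempty → ∀ σ : G → Fin k,
    (⋂ s ∈ F, (D s ∩ (fun x => s • x) ⁻¹' A (σ s))).Nonempty

/-- `J ⊆ G` is an independence set for the tuple `A` relative to the subset `D ⊆ X`. -/
def IndepSet {G X : Type*} [Group G] [MulAction G X] {k : ℕ} (A : Fin k → Set X)
    (D : Set X) (J : Set G) : Prop :=
  IndepRel A (fun _ => D) J

/-- The maximum of `|F ∩ J|` over independence sets `J` for `A` relative to `D`. -/
noncomputable def maxIndep {G X : Type*} [Group G] [MulAction G X] {k : ℕ}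
    (A : Fin k → Set X) (D : G → Set X) (F : Finset G) : ℕ :=
  sSup {m : ℕ | ∃ J : Set G, IndepRel A D J ∧ m = (((F : Set G)) ∩ J).ncard}

/-- `φ_{A,δ}(F)`: the minimum over Borel sets `D` with `μ(D) ≥ 1 - δ` of the maximum
of `|F ∩ J|` over independence sets `J` for `A` relative to `D`. -/
noncomputable def phiConst {G X : Type*} [Group G] [MulAction G X] [MeasurableSpace X]
    (μ : Measure X) {k : ℕ} (A : Fin k → Set X) (δ : ℝ) (F : Finset G) : ℕ :=
  sInf {m : ℕ | ∃ D : Set X, MeasurableSet D ∧ 1 - δ ≤ (μ D).toReal ∧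
    m = maxIndep A (fun _ : G => D) F}

/-- `φ'_{A,δ}(F)`: as `phiConst` but with maps `D : G → Set X` with `μ(D s) ≥ 1 - δ`
for all `s`. -/
noncomputable def phiMap {G X : Type*} [Group G] [MulAction G X] [MeasurableSpace X]
    (μ : Measure X) {k : ℕ} (A : Fin k → Set X) (δ : ℝ) (F : Finset G) : ℕ :=
  sInf {m : ℕ | ∃ D : G → Set X, (∀ s, MeasurableSet (D s)) ∧
    (∀ s, 1 - δ ≤ (μ (D s)).toReal) ∧ m = maxIndep A D F}

/-- The upper `μ`-independence density `Ī_μ(A)` of the tuple `A`. -/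
noncomputable def upperIndepDens (G : Type*) {X : Type*} [Group G] [MulAction G X]
    [MeasurableSpace X] (μ : Measure X) {k : ℕ} (A : Fin k → Set X) : ℝ :=
  ⨆ δ : {d : ℝ // 0 < d}, invLimsup (fun F : Finset G => (phiConst μ A δ.1 F : ℝ))

/-- The lower `μ`-independence density `I̲_μ(A)` of the tuple `A`. -/
noncomputable def lowerIndepDens (G : Type*) {X : Type*} [Group G] [MulAction G X]
    [MeasurableSpace X] (μ : Measure X) {k : ℕ} (A : Fin k → Set X) : ℝ :=
  ⨆ δ : {d : ℝ // 0 < d}, invLiminf (fun F : Finset G => (phiConst μ A δ.1 F : ℝ))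

/-- The measure `μ` is invariant under the action of `G`. -/
def InvariantMeasure (G : Type*) {X : Type*} [Group G] [MulAction G X] [MeasurableSpace X]
    (μ : Measure X) : Prop :=
  ∀ (s : G) (B : Set X), MeasurableSet B → μ ((fun x => s • x) ⁻¹' B) = μ B

/-- The entropy `H_μ(𝒫^F)` of the join `⋁_{s ∈ F} s⁻¹𝒫` of the finite partition `P`. -/
noncomputable def HJoin {G X : Type*} [Group G] [MulAction G X] [MeasurableSpace X]
    (μ : Measure X) {k : ℕ} (P : Fin k → Set X) (F : Finset G) : ℝ :=
  ∑ f : ↥F → Fin k,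
    Real.negMulLog (μ (⋂ s : ↥F, (fun x => (s : G) • x) ⁻¹' P (f s))).toReal

/-- `P` is a finite measurable partition of `X` (members may be empty). -/
def IsMeasPartition {X : Type*} [MeasurableSpace X] {k : ℕ} (P : Fin k → Set X) : Prop :=
  (∀ i, MeasurableSet (P i)) ∧ (Pairwise fun i j => Disjoint (P i) (P j)) ∧
    (⋃ i, P i) = Set.univ

/-- `x` is a (topological) IE-tuple for the action of `G` on `X`. -/
def IsIETuple (G : Type*) {X : Type*} [Group G] [TopologicalSpace X] [MulAction G X]
    {k : ℕ} (x : Fin k → X) : Prop :=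
  ∀ U : Fin k → Set X, (∀ i, U i ∈ nhds (x i)) →
    ∃ d : ℝ, 0 < d ∧ ∀ (K : Finset G) (δ : ℝ), 0 < δ →
      ∃ (F : Finset G) (J : Set G), FolnerInv K δ F ∧ IndepSet U (Set.univ : Set X) J ∧
        d * (F.card : ℝ) ≤ (((F : Set G)) ∩ J).ncard

/-- `x` is a `μ`-IE-tuple. -/
def IsMuIETuple (G : Type*) {X : Type*} [Group G] [TopologicalSpace X] [MulAction G X]
    [MeasurableSpace X] (μ : Measure X) {k : ℕ} (x : Fin k → X) : Prop :=
  ∀ U : Fin k → Set X, (∀ i, U i ∈ nhds (x i)) → 0 < upperIndepDens G μ U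

/-- The minimal number of members of the join cover `𝒰^F` needed to cover `D`. -/
noncomputable def coverNumJoin {G X : Type*} [Group G] [MulAction G X] {m : ℕ}
    (U : Fin m → Set X) (F : Finset G) (D : Set X) : ℕ :=
  sInf {n : ℕ | ∃ t : Finset (↥F → Fin m), t.card = n ∧
    D ⊆ ⋃ f ∈ t, ⋂ s : ↥F, (fun x => (s : G) • x) ⁻¹' U (f s)}

/-- `N_δ(𝒰^F)`: the minimum of `N_D(𝒰^F)` over Borel sets `D` with `μ(D) ≥ 1 − δ`. -/
noncomputable def NdeltaJoin {G X : Type*} [Group G] [MulAction G X] [MeasurableSpace X]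
    (μ : Measure X) {m : ℕ} (U : Fin m → Set X) (δ : ℝ) (F : Finset G) : ℕ :=
  sInf {n : ℕ | ∃ D : Set X, MeasurableSet D ∧ 1 - δ ≤ (μ D).toReal ∧
    n = coverNumJoin U F D}

/-- `h̲_{c,μ}(𝒰) = sup_{δ>0}` liminf of `(1/|F|) ln N_δ(𝒰^F)` as `F` becomes more and
more invariant. -/
noncomputable def hLowerC (G : Type*) {X : Type*} [Group G] [MulAction G X]
    [MeasurableSpace X] (μ : Measure X) {m : ℕ} (U : Fin m → Set X) : ℝ :=
  ⨆ δ : {d : ℝ // 0 < d},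
    invLiminf (fun F : Finset G => Real.log (NdeltaJoin μ U δ.1 F))

/-- `h_μ⁺(𝒰)`: the infimum of `h_μ(𝒫)` over finite Borel partitions `𝒫` refining `𝒰`. -/
noncomputable def hPlus (G : Type*) {X : Type*} [Group G] [MulAction G X]
    [MeasurableSpace X] (μ : Measure X) {m : ℕ} (U : Fin m → Set X) : ℝ :=
  sInf {h : ℝ | ∃ (r : ℕ) (P : Fin r → Set X), IsMeasPartition P ∧
    (∀ a, ∃ i, P a ⊆ U i) ∧ h = invLimsup (fun F : Finset G => HJoin μ P F)}

namespace LocalEntropy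

open scoped Pointwise

section Entropy

variable {Y : Type*} [MeasurableSpace Y] {α β : Type*}

/-- All fibres of the finite-valued map `f` are measurable. -/
def FinMeas (f : Y → β) : Prop := ∀ b, MeasurableSet (f ⁻¹' {b})

/-- The Shannon entropy of a map with values in a finite type. -/
noncomputable def ent (μ : Measure Y) [Fintype β] (f : Y → β) : ℝ :=
  ∑ b, Real.negMulLog (μ.real (f ⁻¹' {b}))

lemma FinMeas.measurable [Countable β] {f : Y → β} (hf : FinMeas f) : Measurable[_, ⊤] f := by
  let : MeasurableSpace β := ⊤
  exact measurable_to_countable' hf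

lemma FinMeas.comp [Countable α] {f : Y → α} (hf : FinMeas f) (φ : α → β) :
    FinMeas (fun y => φ (f y)) := fun b =>
  hf.measurable (MeasurableSpace.measurableSet_top (s := φ ⁻¹' {b}))

lemma FinMeas.prodMk {f : Y → α} {g : Y → β} (hf : FinMeas f) (hg : FinMeas g) :
    FinMeas (fun y => (f y, g y)) := by
  rintro ⟨a, b⟩
  convert (hf a).inter (hg b) using 1
  ext y; simp [Prod.ext_iff]

lemma FinMeas.pi {ι : Type*} [Finite ι] {γ : ι → Type*} {f : ∀ i, Y → γ i}
    (hf : ∀ i, FinMeas (f i)) : FinMeas (fun y i => f i y) := by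
  intro b
  have : (fun y i => f i y) ⁻¹' {b} = ⋂ i, f i ⁻¹' {b i} := by
    ext y; simp [funext_iff]
  rw [this]
  exact MeasurableSet.iInter fun i => hf i _

lemma FinMeas.comp_measurable {Z : Type*} [MeasurableSpace Z] {f : Y → β} (hf : FinMeas f)
    {T : Z → Y} (hT : Measurable T) : FinMeas (fun z => f (T z)) := fun b => hT (hf b)

lemma FinMeas.measurable_comp {Z : Type*} [MeasurableSpace Z] [Countable β] {f : Y → β}
    (hf : FinMeas f) (φ : β → Z) : Measurable (fun y => φ (f y)) := by
  let : MeasurableSpace β := ⊤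
  exact (measurable_from_top : Measurable φ).comp hf.measurable

lemma FinMeas.integrable_comp (μ : Measure Y) [IsFiniteMeasure μ] [Finite β] {f : Y → β}
    (hf : FinMeas f) (φ : β → ℝ) : Integrable (fun y => φ (f y)) μ := by
  obtain ⟨C, hC⟩ := (Set.finite_range fun b => ‖φ b‖).bddAbove
  exact Integrable.of_bound (hf.measurable_comp φ).aestronglyMeasurable C
    (Filter.Eventually.of_forall fun y => hC ⟨f y, rfl⟩)

lemma integral_finMeas_comp (μ : Measure Y) [IsFiniteMeasure μ] [Fintype β] {f : Y → β}
    (hf : FinMeas f) (φ : β → ℝ) :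
    ∫ y, φ (f y) ∂μ = ∑ b, μ.real (f ⁻¹' {b}) * φ b := by
  have h : ∀ y, φ (f y) = ∑ b, (f ⁻¹' {b}).indicator (fun _ => φ b) y := by
    intro y
    rw [Finset.sum_eq_single (f y)]
    · simp
    · intro b _ hb
      simp [Ne.symm hb]
    · simp
  simp_rw [h]
  rw [integral_finsetSum _ fun b _ => (integrable_const (φ b)).indicator (hf b)]
  refine Finset.sum_congr rfl fun b _ => ?_
  rw [integral_indicator_const _ (hf b), smul_eq_mul]

lemma sum_measureReal_fiber (μ : Measure Y) [IsProbabilityMeasure μ] [Fintype β] {f : Y → β}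
    (hf : FinMeas f) : ∑ b, μ.real (f ⁻¹' {b}) = 1 := by
  have := integral_finMeas_comp μ hf (fun _ => 1)
  simpa using this.symm

/-- Gibbs' inequality for finite probability vectors. -/
lemma sum_negMulLog_le [Fintype β] {p r : β → ℝ} (hp : ∀ b, 0 ≤ p b) (hp1 : ∑ b, p b = 1)
    (hr : ∀ b, 0 ≤ r b) (hr1 : ∑ b, r b ≤ 1) (hpr : ∀ b, 0 < p b → 0 < r b) :
    ∑ b, Real.negMulLog (p b) ≤ ∑ b, p b * -Real.log (r b) := by
  have key : ∀ b, Real.negMulLog (p b) - p b * -Real.log (r b) ≤ r b - p b := by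
    intro b
    rcases (hp b).eq_or_lt with h | h
    · simp [← h, hr b]
    · have h1 := Real.log_le_sub_one_of_pos (div_pos (hpr b h) h)
      rw [Real.log_div (hpr b h).ne' h.ne'] at h1
      have h2 := mul_le_mul_of_nonneg_left h1 h.le
      have h3 : p b * (r b / p b - 1) = r b - p b := by field_simp
      rw [Real.negMulLog]
      linarith
  have := Finset.sum_le_sum fun b (_ : b ∈ Finset.univ) => key b
  rw [Finset.sum_sub_distrib, Finset.sum_sub_distrib] at this
  linarith

lemma ent_le_integral (μ : Measure Y) [IsProbabilityMeasure μ] [Fintype β] {f : Y → β}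
    (hf : FinMeas f) {r : β → ℝ} (hr : ∀ b, 0 ≤ r b) (hr1 : ∑ b, r b ≤ 1)
    (hpos : ∀ y, 0 < r (f y)) : ent μ f ≤ ∫ y, -Real.log (r (f y)) ∂μ := by
  rw [integral_finMeas_comp μ hf fun b => -Real.log (r b)]
  refine sum_negMulLog_le (fun _ => measureReal_nonneg) (sum_measureReal_fiber μ hf) hr hr1 ?_
  intro b hb
  have : (f ⁻¹' {b}).Nonempty := by
    by_contra h
    rw [Set.not_nonempty_iff_eq_empty] at h
    simp [h] at hb
  obtain ⟨y, rfl⟩ := this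
  exact hpos y

lemma negMulLog_sum_le {ι : Type*} (s : Finset ι) {p : ι → ℝ} (hp : ∀ i, 0 ≤ p i) :
    Real.negMulLog (∑ i ∈ s, p i) ≤ ∑ i ∈ s, Real.negMulLog (p i) := by
  rw [Real.negMulLog, ← neg_mul_eq_neg_mul, Finset.sum_mul, ← Finset.sum_neg_distrib]
  refine Finset.sum_le_sum fun i hi => ?_
  rcases (hp i).eq_or_lt with h | h
  · simp [← h]
  · rw [Real.negMulLog, ← neg_mul_eq_neg_mul]
    exact neg_le_neg (mul_le_mul_of_nonneg_left
      (Real.log_le_log h (Finset.single_le_sum (fun j _ => hp j) hi)) h.le)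

/-- The entropy does not increase when the map is composed with another one. -/
lemma ent_comp_le (μ : Measure Y) [IsProbabilityMeasure μ] [Fintype α] [Fintype β] {f : Y → α}
    (hf : FinMeas f) (φ : α → β) : ent μ (fun y => φ (f y)) ≤ ent μ f := by
  have h : ∀ b, μ.real ((fun y => φ (f y)) ⁻¹' {b}) =
      ∑ a with φ a = b, μ.real (f ⁻¹' {a}) := by
    intro b
    rw [← measureReal_biUnion_finset]
    · congr 1
      ext y; simp
    · intro a _ a' _ haa
      exact Disjoint.preimage _ (by simpa using haa)
    · exact fun a _ => hf a
  unfold ent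
  simp_rw [h]
  refine (Finset.sum_le_sum fun b _ => negMulLog_sum_le _ fun _ => measureReal_nonneg).trans ?_
  refine le_of_eq ?_
  convert Finset.sum_fiberwise Finset.univ φ fun a => Real.negMulLog (μ.real (f ⁻¹' {a}))

/-- A measurable choice of a member of a finite family of measurable sets. -/
lemma exists_finMeas_choice [Finite β] {A : β → Set Y} (hA : ∀ b, MeasurableSet (A b)) :
    ∃ f : Y → Option β, FinMeas f ∧ (∀ y, f y = none ↔ ∀ b, y ∉ A b) ∧
      ∀ y b, f y = some b → y ∈ A b := by
  have : Fintype β := Fintype.ofFinite β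
  let e := Fintype.equivFin β
  let C : β → Set Y := fun b => A b \ ⋃ b' : {b' : β // e b' < e b}, A b'
  have hC : ∀ b, MeasurableSet (C b) := fun b =>
    (hA b).diff (MeasurableSet.iUnion fun b' => hA b')
  have huniq : ∀ y b b', y ∈ C b → y ∈ C b' → b = b' := by
    intro y b b' h h'
    rcases lt_trichotomy (e b) (e b') with hlt | heq | hlt
    · exact absurd (mem_iUnion.2 ⟨⟨b, hlt⟩, h.1⟩) h'.2
    · exact e.injective heq
    · exact absurd (mem_iUnion.2 ⟨⟨b', hlt⟩, h'.1⟩) h.2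
  have hex : ∀ y b, y ∈ A b → ∃ b', y ∈ C b' := by
    intro y b hb
    obtain ⟨b', hb', hmin⟩ := Finset.exists_min_image (Finset.univ.filter fun b => y ∈ A b) e
      ⟨b, by simpa using hb⟩
    refine ⟨b', by simpa using hb', ?_⟩
    rintro h
    obtain ⟨⟨c, hc⟩, hyc⟩ := mem_iUnion.1 h
    exact absurd (hmin c (by simpa using hyc)) (not_le.2 hc)
  let f : Y → Option β := fun y => if h : ∃ b, y ∈ C b then some h.choose else none
  have hsome : ∀ y b, f y = some b ↔ y ∈ C b := by
    intro y b
    by_cases h : ∃ b, y ∈ C b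
    · have : f y = some h.choose := dif_pos h
      rw [this, Option.some.injEq]
      exact ⟨fun e => e ▸ h.choose_spec, fun hb => huniq y _ _ h.choose_spec hb⟩
    · have : f y = none := dif_neg h
      simp only [this, reduceCtorEq, false_iff]
      exact fun hb => h ⟨b, hb⟩
  have hnone : ∀ y, f y = none ↔ ∀ b, y ∉ A b := by
    intro y
    rw [Option.eq_none_iff_forall_ne_some]
    constructor
    · intro h b hb
      obtain ⟨b', hb'⟩ := hex y b hb
      exact h b' ((hsome y b').2 hb')
    · intro h b hb
      exact h b ((hsome y b).1 hb).1
  refine ⟨f, ?_, hnone, fun y b h => ((hsome y b).1 h).1⟩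
  rintro (_ | b)
  · have : f ⁻¹' {none} = ⋂ b, (A b)ᶜ := by
      ext y; simp [hnone]
    rw [this]
    exact MeasurableSet.iInter fun b => (hA b).compl
  · have : f ⁻¹' {some b} = C b := by
      ext y; simp [hsome]
    rw [this]
    exact hC b

end Entropy

section Folner

variable {G : Type*} [Group G]

lemma folnerInv_ncard (K F : Finset G) :
    (((F : Set G)) ∩ {s : G | ∀ g ∈ K, g * s ∈ F}).ncard =
      (F.filter fun s => ∀ g ∈ K, g * s ∈ F).card := by
  rw [← Set.ncard_coe_finset]
  congr 1
  ext s; simp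

lemma card_bad_le {K F : Finset G} {δ : ℝ} (h : FolnerInv K δ F) :
    ((F.filter fun s => ¬ ∀ g ∈ K, g * s ∈ F).card : ℝ) ≤ δ * F.card := by
  have h1 := h.2
  rw [folnerInv_ncard] at h1
  have h2 : ((F.filter fun s => ∀ g ∈ K, g * s ∈ F).card : ℝ) +
      (F.filter fun s => ¬ ∀ g ∈ K, g * s ∈ F).card = F.card := by
    exact_mod_cast Finset.card_filter_add_card_filter_not (s := F) fun s => ∀ g ∈ K, g * s ∈ F
  linarith

lemma card_mul_sdiff_le {K F : Finset G} {δ : ℝ} (h : FolnerInv K δ F) :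
    (((K * F) \ F).card : ℝ) ≤ K.card * δ * F.card := by
  have hsub : (K * F) \ F ⊆ K * F.filter fun s => ¬ ∀ g ∈ K, g * s ∈ F := by
    intro x hx
    rw [Finset.mem_sdiff, Finset.mem_mul] at hx
    obtain ⟨⟨k, hk, s, hs, rfl⟩, hx⟩ := hx
    refine Finset.mul_mem_mul hk ?_
    rw [Finset.mem_filter]
    exact ⟨hs, fun H => hx (H k hk)⟩
  have h1 : (((K * F) \ F).card : ℝ) ≤
      K.card * (F.filter fun s => ¬ ∀ g ∈ K, g * s ∈ F).card := by
    exact_mod_cast (Finset.card_le_card hsub).trans Finset.card_mul_le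
  have h2 := mul_le_mul_of_nonneg_left (card_bad_le h) (Nat.cast_nonneg (α := ℝ) K.card)
  linarith

lemma folnerInv_mono {K K' F : Finset G} {δ δ' : ℝ} (hK : K' ⊆ K) (hδ : δ ≤ δ')
    (h : FolnerInv K δ F) : FolnerInv K' δ' F := by
  refine ⟨h.1, ?_⟩
  have h1 := h.2
  rw [folnerInv_ncard] at h1 ⊢
  have h2 : ((F.filter fun s => ∀ g ∈ K, g * s ∈ F).card : ℝ) ≤
      (F.filter fun s => ∀ g ∈ K', g * s ∈ F).card := by
    refine Nat.cast_le.2 (Finset.card_le_card fun s hs => ?_)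
    rw [Finset.mem_filter] at hs ⊢
    exact ⟨hs.1, fun g hg => hs.2 g (hK hg)⟩
  have h3 : (1 - δ') * (F.card : ℝ) ≤ (1 - δ) * F.card := by gcongr
  linarith

lemma card_le_of_folnerInv {K F : Finset G} {δ : ℝ} (hδ : δ < 1) (h : FolnerInv K δ F) :
    K.card ≤ F.card := by
  have h1 := h.2
  rw [folnerInv_ncard] at h1
  have h2 : 0 < (F.filter fun s => ∀ g ∈ K, g * s ∈ F).card := by
    have : (0 : ℝ) < (1 - δ) * F.card :=
      mul_pos (by linarith) (by exact_mod_cast h.1.card_pos)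
    exact_mod_cast this.trans_le h1
  obtain ⟨s, hs⟩ := Finset.card_pos.1 h2
  rw [Finset.mem_filter] at hs
  exact Finset.card_le_card_of_injOn (fun g => g * s) (fun g hg => hs.2 g hg)
    (fun a _ b _ hab => mul_right_cancel hab)

end Folner

section Stabilizer

variable (G : Type*) {Y : Type*} [Group G] [MulAction G Y]

/-- The cardinality of the stabilizer of `x`. -/
noncomputable def stabCard (x : Y) : ℝ≥0∞ := ∑' u : G, if u • x = x then 1 else 0

variable {G} in
/-- The number of elements of `K` which fix `x`. -/
noncomputable def stabCardOn (K : Finset G) (x : Y) : ℝ≥0∞ := ∑ u ∈ K, if u • x = x then 1 else 0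

/-- The inverse of the cardinality of the stabilizer of `x`. -/
noncomputable def wt (x : Y) : ℝ≥0∞ := (stabCard G x)⁻¹

variable {G}

lemma stabCardOn_eq (K : Finset G) (x : Y) :
    stabCardOn K x = ((K.filter fun u => u • x = x).card : ℝ≥0∞) := by
  rw [stabCardOn, Finset.sum_boole]

lemma stabCardOn_le (K : Finset G) (x : Y) : stabCardOn K x ≤ stabCard G x :=
  ENNReal.sum_le_tsum K

lemma one_le_stabCardOn {K : Finset G} (hK : 1 ∈ K) (x : Y) : 1 ≤ stabCardOn K x := by
  rw [stabCardOn_eq]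
  exact_mod_cast Finset.card_pos.2 ⟨1, by simp [hK]⟩

lemma one_le_stabCard (x : Y) : 1 ≤ stabCard G x :=
  (one_le_stabCardOn (Finset.mem_singleton_self 1) x).trans (stabCardOn_le _ x)

lemma wt_le_one (x : Y) : wt G x ≤ 1 := ENNReal.inv_le_one.2 (one_le_stabCard x)

lemma stabCard_smul (g : G) (x : Y) : stabCard G (g • x) = stabCard G x := by
  unfold stabCard
  rw [← (MulAut.conj g).toEquiv.tsum_eq]
  refine tsum_congr fun u => ?_
  have : ((MulAut.conj g) u • g • x = g • x) ↔ u • x = x := by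
    rw [MulAut.conj_apply, smul_smul, inv_mul_cancel_right, ← smul_smul, smul_left_cancel_iff]
  exact if_congr this rfl rfl

lemma wt_smul (g : G) (x : Y) : wt G (g • x) = wt G x := by
  rw [wt, wt, stabCard_smul]

/-- A set of group elements all fixing `x` has at most `stabCard G x` elements. -/
lemma card_le_stabCard {M : Finset G} {x : Y} (hM : ∀ u ∈ M, u • x = x) :
    (M.card : ℝ≥0∞) ≤ stabCard G x := by
  refine le_trans (le_of_eq ?_) (stabCardOn_le M x)
  rw [stabCardOn_eq, Finset.filter_true_of_mem hM]

lemma wt_mul_le_one {x : Y} {c : ℝ≥0∞} (hc : c ≤ stabCard G x) : wt G x * c ≤ 1 :=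
  (mul_le_mul_right hc _).trans (ENNReal.inv_mul_le_one _)

lemma one_le_wt_mul {x : Y} {c : ℝ≥0∞} (hc : stabCard G x ≤ c) (hfin : stabCard G x ≠ ∞) :
    1 ≤ wt G x * c := by
  rw [← ENNReal.inv_mul_cancel (zero_lt_one.trans_le (one_le_stabCard x)).ne' hfin]
  exact mul_le_mul_right hc _

variable [MeasurableSpace Y] [MeasurableSpace.CountablySeparated Y] [MeasurableConstSMul G Y]

lemma measurableSet_fix (u : G) : MeasurableSet {x : Y | u • x = x} := by
  obtain ⟨ι, hι, hinj⟩ := MeasurableSpace.measurable_injection_nat_bool_of_countablySeparated Y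
  have : {x : Y | u • x = x} = {x | ι (u • x) = ι x} := by
    ext x; simp [hinj.eq_iff]
  rw [this]
  exact measurableSet_eq_fun (hι.comp (measurable_const_smul u)) hι

lemma measurable_ite_fix (u : G) : Measurable fun x : Y => if u • x = x then (1 : ℝ≥0∞) else 0 :=
  Measurable.ite (measurableSet_fix u) measurable_const measurable_const

lemma measurable_stabCardOn (K : Finset G) : Measurable fun x : Y => stabCardOn K x :=
  Finset.measurable_fun_sum _ fun u _ => measurable_ite_fix u

lemma measurable_stabCard [Countable G] : Measurable fun x : Y => stabCard G x :=
  Measurable.tsum fun u => measurable_ite_fix u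

lemma measurable_wt [Countable G] : Measurable fun x : Y => wt G x :=
  measurable_stabCard.inv

lemma exists_stabCardOn_approx [Countable G] (μ : Measure Y) [IsProbabilityMeasure μ] {ε : ℝ}
    (hε : 0 < ε) : ∃ K : Finset G, 1 ∈ K ∧
      ∫ x, (((stabCardOn K x)⁻¹).toReal - (wt G x).toReal) ∂μ ≤ ε := by
  have h1 : Filter.Tendsto (fun K : Finset G => ∫ x, ((stabCardOn (insert 1 K) x)⁻¹).toReal ∂μ)
      Filter.atTop (nhds (∫ x, (wt G x).toReal ∂μ)) := by
    refine tendsto_integral_filter_of_dominated_convergence (fun _ => 1) ?_ ?_ ?_ ?_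
    · exact Filter.Eventually.of_forall fun K =>
        (measurable_stabCardOn _).inv.ennreal_toReal.aestronglyMeasurable
    · refine Filter.Eventually.of_forall fun K => Filter.Eventually.of_forall fun x => ?_
      rw [Real.norm_of_nonneg ENNReal.toReal_nonneg]
      exact ENNReal.toReal_mono ENNReal.one_ne_top
        (ENNReal.inv_le_one.2 (one_le_stabCardOn (Finset.mem_insert_self _ _) x))
    · exact integrable_const _
    · refine Filter.Eventually.of_forall fun x => ?_
      have h2 : Filter.Tendsto (fun K : Finset G => stabCardOn (insert 1 K) x) Filter.atTop
          (nhds (stabCard G x)) := by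
        refine (ENNReal.summable.hasSum :
          HasSum (fun u : G => if u • x = x then (1 : ℝ≥0∞) else 0) _).comp ?_
        exact Filter.tendsto_atTop_mono (fun K => Finset.subset_insert 1 K) Filter.tendsto_id
      exact (ENNReal.tendsto_toReal
        ((wt_le_one x).trans_lt ENNReal.one_lt_top).ne).comp h2.inv
  have h3 := h1.eventually (gt_mem_nhds (lt_add_of_pos_right (∫ x, (wt G x).toReal ∂μ) hε))
  obtain ⟨K, hK⟩ := h3.exists
  refine ⟨insert 1 K, Finset.mem_insert_self _ _, ?_⟩
  rw [integral_sub]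
  · linarith
  · refine Integrable.of_bound
      (measurable_stabCardOn _).inv.ennreal_toReal.aestronglyMeasurable 1
      (Filter.Eventually.of_forall fun x => ?_)
    rw [Real.norm_of_nonneg ENNReal.toReal_nonneg]
    exact ENNReal.toReal_mono ENNReal.one_ne_top
      (ENNReal.inv_le_one.2 (one_le_stabCardOn (Finset.mem_insert_self _ _) x))
  · refine Integrable.of_bound measurable_wt.ennreal_toReal.aestronglyMeasurable 1
      (Filter.Eventually.of_forall fun x => ?_)
    rw [Real.norm_of_nonneg ENNReal.toReal_nonneg]
    exact ENNReal.toReal_mono ENNReal.one_ne_top (wt_le_one x)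

end Stabilizer

section Coding

variable {Y : Type*} [MeasurableSpace Y] {α ι lab : Type*} [Fintype α] [Fintype ι] [Fintype lab]

/-- Words which are constant on the classes of an equivalence relation are determined by their
values on a transversal, so that their total product weight is at most one. -/
lemma sum_prod_transversal_le (r : Setoid ι) {q : α → ℝ} (hq : ∀ a, 0 < q a)
    (hq1 : ∑ a, q a ≤ 1) :
    ∑ w : ι → α, (if ∀ s s', r s s' → w s = w s' then
      ∏ κ : Quotient r, q (w κ.out) else 0) ≤ 1 := by
  rw [← Finset.sum_filter]
  let φ : (ι → α) → (Quotient r → α) := fun w κ => w κ.out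
  have hinj : Set.InjOn φ (Finset.univ.filter fun w : ι → α => ∀ s s', r s s' → w s = w s') := by
    intro w hw w' hw' h
    simp only [Finset.coe_filter, Finset.mem_univ, true_and, mem_ofPred_eq] at hw hw'
    ext s
    have h1 : r (Quotient.mk r s).out s := Quotient.mk_out s
    have h2 : w (Quotient.mk r s).out = w' (Quotient.mk r s).out := congrFun h (Quotient.mk r s)
    rw [← hw _ _ h1, ← hw' _ _ h1, h2]
  have h1 : ∑ w ∈ Finset.univ.filter (fun w : ι → α => ∀ s s', r s s' → w s = w s'),
      ∏ κ : Quotient r, q (w κ.out) =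
      ∑ v ∈ (Finset.univ.filter fun w : ι → α => ∀ s s', r s s' → w s = w s').image φ,
        ∏ κ, q (v κ) := by
    rw [Finset.sum_image hinj]
  rw [h1]
  refine (Finset.sum_le_sum_of_subset_of_nonneg (Finset.subset_univ _) fun v _ _ =>
    Finset.prod_nonneg fun κ _ => (hq _).le).trans ?_
  have h2 : ∑ v : Quotient r → α, ∏ κ, q (v κ) = ∏ _κ : Quotient r, ∑ a, q a := by
    rw [Finset.prod_univ_sum, Fintype.piFinset_univ]
  rw [h2]
  exact Finset.prod_le_one (fun _ _ => Finset.sum_nonneg fun a _ => (hq a).le) fun _ _ => hq1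

lemma sum_transversal_eq (r : Setoid ι) {c : ι → ℝ} (hc : ∀ s s', r s s' → c s = c s') :
    ∑ κ : Quotient r, c κ.out =
      ∑ s, c s * ((Finset.univ.filter fun s' => r s s').card : ℝ)⁻¹ := by
  have h : ∑ s, c s * ((Finset.univ.filter fun s' => r s s').card : ℝ)⁻¹ =
      ∑ κ : Quotient r, ∑ s with Quotient.mk r s = κ,
        c s * ((Finset.univ.filter fun s' => r s s').card : ℝ)⁻¹ := by
    symm
    convert Finset.sum_fiberwise Finset.univ (Quotient.mk r) fun s =>
      c s * ((Finset.univ.filter fun s' => r s s').card : ℝ)⁻¹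
  rw [h]
  refine Finset.sum_congr rfl fun κ _ => ?_
  have hmem : ∀ s, Quotient.mk r s = κ ↔ r κ.out s := by
    intro s
    rw [← Quotient.eq (r := r), Quotient.out_eq]
    exact eq_comm
  have h2 : ∀ s ∈ Finset.univ.filter (fun s => Quotient.mk r s = κ),
      c s * ((Finset.univ.filter fun s' => r s s').card : ℝ)⁻¹ =
      c κ.out * ((Finset.univ.filter fun s => Quotient.mk r s = κ).card : ℝ)⁻¹ := by
    intro s hs
    rw [Finset.mem_filter, hmem] at hs
    rw [hc _ _ hs.2]
    congr 3
    congr 1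
    ext s'
    rw [Finset.mem_filter, Finset.mem_filter, hmem]
    simp only [Finset.mem_univ, true_and]
    exact ⟨fun h => r.trans hs.2 h, fun h => r.trans (r.symm hs.2) h⟩
  rw [Finset.sum_congr rfl h2, Finset.sum_const, nsmul_eq_mul]
  have h3 : ((Finset.univ.filter fun s => Quotient.mk r s = κ).card : ℝ) ≠ 0 := by
    refine Nat.cast_ne_zero.2 (Finset.card_pos.2 ⟨κ.out, ?_⟩).ne'
    rw [Finset.mem_filter]
    exact ⟨Finset.mem_univ _, Quotient.out_eq κ⟩
  field_simp

/-- A coding bound for the entropy of a word some of whose letters are forced to agree. -/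
lemma ent_le_of_label (μ : Measure Y) [IsProbabilityMeasure μ] {A : Y → lab} (hA : FinMeas A)
    {ω : Y → ι → α} (hω : FinMeas ω) (r : lab → Setoid ι)
    (hr : ∀ y s s', r (A y) s s' → ω y s = ω y s') {q : α → ℝ} (hq : ∀ a, 0 < q a)
    (hq1 : ∑ a, q a ≤ 1) :
    ent μ ω ≤ Real.log (Fintype.card lab) + ∫ y, ∑ s, -Real.log (q (ω y s)) *
      ((Finset.univ.filter fun s' => r (A y) s s').card : ℝ)⁻¹ ∂μ := by
  obtain ⟨y0⟩ : Nonempty Y := μ.nonempty_of_neZero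
  have : Nonempty lab := ⟨A y0⟩
  have hcard : (0 : ℝ) < Fintype.card lab := by exact_mod_cast Fintype.card_pos
  let R : lab × (ι → α) → ℝ := fun p => (Fintype.card lab : ℝ)⁻¹ *
    if ∀ s s', r p.1 s s' → p.2 s = p.2 s' then ∏ κ : Quotient (r p.1), q (p.2 κ.out) else 0
  have hprod : ∀ (a : lab) (w : ι → α), 0 < ∏ κ : Quotient (r a), q (w κ.out) := fun a w =>
    Finset.prod_pos fun κ _ => hq _
  have hR0 : ∀ p, 0 ≤ R p := by
    intro p
    refine mul_nonneg (inv_nonneg.2 hcard.le) ?_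
    split_ifs
    · exact (hprod _ _).le
    · exact le_rfl
  have hR1 : ∑ p, R p ≤ 1 := by
    rw [Fintype.sum_prod_type]
    have h1 : ∀ a : lab, ∑ w : ι → α, R (a, w) ≤ (Fintype.card lab : ℝ)⁻¹ := by
      intro a
      simp only [R]
      rw [← Finset.mul_sum]
      exact mul_le_of_le_one_right (inv_nonneg.2 hcard.le) (sum_prod_transversal_le (r a) hq hq1)
    refine (Finset.sum_le_sum fun a _ => h1 a).trans (le_of_eq ?_)
    rw [Finset.sum_const, nsmul_eq_mul, Finset.card_univ]
    exact mul_inv_cancel₀ hcard.ne'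
  have hRy : ∀ y, R (A y, ω y) =
      (Fintype.card lab : ℝ)⁻¹ * ∏ κ : Quotient (r (A y)), q (ω y κ.out) := by
    intro y
    simp only [R]
    rw [if_pos (hr y)]
  have hpos : ∀ y, 0 < R (A y, ω y) := fun y => by
    rw [hRy]; exact mul_pos (inv_pos.2 hcard) (hprod _ _)
  have hpair : FinMeas fun y => (A y, ω y) := hA.prodMk hω
  refine (ent_comp_le μ hpair Prod.snd).trans ((ent_le_integral μ hpair hR0 hR1 hpos).trans ?_)
  have hlog : ∀ y, -Real.log (R (A y, ω y)) = Real.log (Fintype.card lab) +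
      ∑ s, -Real.log (q (ω y s)) *
        ((Finset.univ.filter fun s' => r (A y) s s').card : ℝ)⁻¹ := by
    intro y
    rw [← sum_transversal_eq (r (A y)) (c := fun s => -Real.log (q (ω y s)))
      fun s s' h => by rw [hr y s s' h], hRy,
      Real.log_mul (inv_pos.2 hcard).ne' (hprod _ _).ne', Real.log_inv,
      Real.log_prod fun κ _ => (hq _).ne', Finset.sum_neg_distrib]
    ring
  simp_rw [hlog]
  rw [integral_add (integrable_const _)]
  · simp
  · exact hpair.integrable_comp μ fun p => ∑ s, -Real.log (q (p.2 s)) *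
        ((Finset.univ.filter fun s' => r p.1 s s').card : ℝ)⁻¹

end Coding

section EntropyBound

variable {G : Type*} [Group G]

lemma exists_separated (L F : Finset G) (hL : L.Nonempty) : ∃ T ⊆ F,
    T.card * L.card ≤ (L * F).card ∧
      ∃ τ γ : G → G, ∀ s ∈ F, τ s ∈ T ∧ γ s ∈ L⁻¹ * L ∧ s = γ s * τ s := by
  let S : Finset (Finset G) := F.powerset.filter fun T =>
    ∀ t ∈ T, ∀ t' ∈ T, t ≠ t' → ∀ l ∈ L, ∀ l' ∈ L, l * t ≠ l' * t'
  obtain ⟨T, hT, hmax⟩ := Finset.exists_max_image S Finset.card ⟨∅, by simp [S]⟩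
  obtain ⟨hTF, hsep⟩ : T ⊆ F ∧ ∀ t ∈ T, ∀ t' ∈ T, t ≠ t' → ∀ l ∈ L, ∀ l' ∈ L, l * t ≠ l' * t' := by
    simpa [S] using hT
  refine ⟨T, hTF, ?_, ?_⟩
  · have hinj : Set.InjOn (fun p : G × G => p.1 * p.2) (L ×ˢ T : Finset (G × G)) := by
      rintro ⟨l, t⟩ h ⟨l', t'⟩ h' heq
      simp only [Finset.coe_product, mem_prod, Finset.mem_coe] at h h' heq
      by_cases htt : t = t'
      · subst htt
        rw [mul_right_cancel heq]
      · exact absurd heq (hsep t h.2 t' h'.2 htt l h.1 l' h'.1)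
    rw [mul_comm, ← Finset.card_product, ← Finset.card_image_of_injOn hinj]
    refine Finset.card_le_card fun x hx => ?_
    obtain ⟨p, hp, rfl⟩ := Finset.mem_image.1 hx
    rw [Finset.mem_product] at hp
    exact Finset.mul_mem_mul hp.1 (hTF hp.2)
  · have key : ∀ s, ∃ t g, s ∈ F → t ∈ T ∧ g ∈ L⁻¹ * L ∧ s = g * t := by
      intro s
      by_cases hs : s ∈ F
      swap
      · exact ⟨1, 1, fun h => absurd h hs⟩
      by_contra hcon
      push Not at hcon
      have hne : ∀ t ∈ T, ∀ l ∈ L, ∀ l' ∈ L, l * s ≠ l' * t := by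
        intro t ht l hl l' hl' heq
        refine (hcon t (l⁻¹ * l')).2 ht (Finset.mul_mem_mul (Finset.inv_mem_inv hl) hl') ?_
        rw [mul_assoc, ← heq, inv_mul_cancel_left]
      have hsT : s ∉ T := by
        intro h
        obtain ⟨l, hl⟩ := hL
        exact hne s h l hl l hl rfl
      have hmem : insert s T ∈ S := by
        simp only [S, Finset.mem_filter, Finset.mem_powerset]
        refine ⟨Finset.insert_subset hs hTF, ?_⟩
        intro t ht t' ht' htt l hl l' hl'
        rw [Finset.mem_insert] at ht ht'
        rcases ht with rfl | ht <;> rcases ht' with rfl | ht'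
        · exact absurd rfl htt
        · exact hne t' ht' l hl l' hl'
        · exact (hne t ht l' hl' l hl).symm
        · exact hsep t ht t' ht' htt l hl l' hl'
      have := hmax _ hmem
      rw [Finset.card_insert_of_notMem hsT] at this
      omega
    choose τ γ h using key
    exact ⟨τ, γ, h⟩

variable {Y : Type*} [MulAction G Y]

lemma wt_le_inv_stabCardOn (K : Finset G) (x : Y) : wt G x ≤ (stabCardOn K x)⁻¹ :=
  ENNReal.inv_le_inv.2 (stabCardOn_le K x)

lemma inv_stabCardOn_ne_top {K : Finset G} (hK : 1 ∈ K) (x : Y) : (stabCardOn K x)⁻¹ ≠ ∞ :=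
  ((ENNReal.inv_le_one.2 (one_le_stabCardOn hK x)).trans_lt ENNReal.one_lt_top).ne

variable [MeasurableSpace Y] [MeasurableSpace.CountablySeparated Y] [MeasurableConstSMul G Y]

lemma ent_le_of_separated [Countable G] (μ : Measure Y) [IsProbabilityMeasure μ]
    [SMulInvariantMeasure G Y μ] {α : Type*} [Fintype α] {Q : Y → α} (hQ : FinMeas Q)
    {q : α → ℝ} (hq : ∀ a, 0 < q a) (hq1 : ∑ a, q a ≤ 1) {C : ℝ} (hC : ∀ a, -Real.log (q a) ≤ C)
    {K₀ L F T : Finset G} (hK₀ : 1 ∈ K₀) {τ γ : G → G}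
    (hτ : ∀ s ∈ F, τ s ∈ T ∧ γ s ∈ L⁻¹ * L ∧ s = γ s * τ s) :
    ent μ (fun y (s : ↥F) => Q ((s : G) • y)) ≤ T.card * (K₀.card * Real.log 2) +
      F.card * (∫ y, (wt G y).toReal * -Real.log (q (Q y)) ∂μ +
        C * ∫ y, (((stabCardOn K₀ y)⁻¹).toReal - (wt G y).toReal) ∂μ) +
      C * (F.filter fun s => ¬ ∀ g ∈ L⁻¹ * L, ∀ u ∈ K₀, g * u * g⁻¹ * s ∈ F).card := by
  let A : Y → (↥T → ↥K₀ → Bool) := fun y t u => decide ((u : G) • (t : G) • y = (t : G) • y)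
  have hA : FinMeas A := by
    refine FinMeas.pi fun t => FinMeas.pi fun u => ?_
    have hm : Measurable fun y : Y => (t : G) • y := measurable_const_smul _
    refine FinMeas.comp_measurable (f := fun z : Y => decide ((u : G) • z = z)) ?_ hm
    rintro (_ | _)
    · convert (measurableSet_fix (Y := Y) (u : G)).compl using 1
      ext; simp
    · convert measurableSet_fix (Y := Y) (u : G) using 1
      ext; simp
  let r : (↥T → ↥K₀ → Bool) → Setoid ↥F := fun a =>
    { r := fun s s' => ∀ y, A y = a → (s : G) • y = (s' : G) • y
      iseqv := ⟨fun _ _ _ => rfl, fun h y hy => (h y hy).symm,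
        fun h h' y hy => (h y hy).trans (h' y hy)⟩ }
  have hω : FinMeas (fun y (s : ↥F) => Q ((s : G) • y)) :=
    FinMeas.pi fun s => hQ.comp_measurable (measurable_const_smul (s : G))
  have hr : ∀ y (s s' : ↥F), r (A y) s s' → Q ((s : G) • y) = Q ((s' : G) • y) := by
    intro y s s' h
    have h : (s : G) • y = (s' : G) • y := h y rfl
    rw [h]
  have hc0 : ∀ a, 0 ≤ -Real.log (q a) := by
    intro a
    have h1 : q a ≤ 1 := (Finset.single_le_sum (fun b _ => (hq b).le) (Finset.mem_univ a)).trans hq1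
    have := Real.log_nonpos (hq a).le h1
    linarith
  obtain ⟨y0⟩ : Nonempty Y := μ.nonempty_of_neZero
  have hC0 : 0 ≤ C := (hc0 (Q y0)).trans (hC _)
  have hw1 : ∀ y : Y, (wt G y).toReal ≤ 1 := fun y =>
    ENNReal.toReal_mono ENNReal.one_ne_top (wt_le_one y)
  have hθ1 : ∀ y : Y, ((stabCardOn K₀ y)⁻¹).toReal ≤ 1 := fun y =>
    ENNReal.toReal_mono ENNReal.one_ne_top (ENNReal.inv_le_one.2 (one_le_stabCardOn hK₀ y))
  have hwθ : ∀ y : Y, (wt G y).toReal ≤ ((stabCardOn K₀ y)⁻¹).toReal := fun y =>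
    ENNReal.toReal_mono (inv_stabCardOn_ne_top hK₀ y) (wt_le_inv_stabCardOn K₀ y)
  have hmw : Measurable fun y : Y => (wt G y).toReal := measurable_wt.ennreal_toReal
  have hmθ : Measurable fun y : Y => ((stabCardOn K₀ y)⁻¹).toReal :=
    (measurable_stabCardOn _).inv.ennreal_toReal
  have hi1 : Integrable (fun y : Y => (wt G y).toReal * -Real.log (q (Q y))) μ := by
    refine Integrable.of_bound
      (hmw.mul (hQ.measurable_comp fun a => -Real.log (q a))).aestronglyMeasurable C
      (Filter.Eventually.of_forall fun y => ?_)
    rw [Real.norm_of_nonneg (mul_nonneg ENNReal.toReal_nonneg (hc0 _))]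
    exact (mul_le_of_le_one_left (hc0 _) (hw1 y)).trans (hC _)
  have hi2 : Integrable (fun y : Y => ((stabCardOn K₀ y)⁻¹).toReal - (wt G y).toReal) μ := by
    refine Integrable.of_bound (hmθ.sub hmw).aestronglyMeasurable 1
      (Filter.Eventually.of_forall fun y => ?_)
    rw [Real.norm_of_nonneg (sub_nonneg.2 (hwθ y))]
    have := hθ1 y
    have : 0 ≤ (wt G y).toReal := ENNReal.toReal_nonneg
    linarith
  have hclass : ∀ y, ∀ s : ↥F, (∀ g ∈ L⁻¹ * L, ∀ u ∈ K₀, g * u * g⁻¹ * (s : G) ∈ F) →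
      ((Finset.univ.filter fun s' => r (A y) s s').card : ℝ)⁻¹ ≤
        ((stabCardOn K₀ (τ s • y))⁻¹).toReal := by
    intro y s hs
    obtain ⟨h1, h2, h3⟩ := hτ s s.2
    rw [stabCardOn_eq, ENNReal.toReal_inv, ENNReal.toReal_natCast]
    have hpos : 0 < (K₀.filter fun u => u • τ s • y = τ s • y).card :=
      Finset.card_pos.2 ⟨1, by simp [hK₀]⟩
    refine inv_anti₀ (by exact_mod_cast hpos) (Nat.cast_le.2 ?_)
    have hmemF : ∀ u ∈ K₀, γ s * u * τ s ∈ F := by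
      intro u hu
      have := hs _ h2 u hu
      rw [show γ s * u * (γ s)⁻¹ * (s : G) = γ s * u * τ s by
        nth_rewrite 3 [h3]; group] at this
      exact this
    refine Finset.card_le_card_of_injOn
      (fun u => if h : u ∈ K₀ then ⟨γ s * u * τ s, hmemF u h⟩ else s) ?_ ?_
    · intro u hu
      obtain ⟨hu, hfix⟩ := Finset.mem_filter.1 (Finset.mem_coe.1 hu)
      simp only [dif_pos hu, Finset.coe_filter, Finset.mem_univ, true_and, mem_ofPred_eq]
      intro z hz
      have hz' : A z ⟨τ s, h1⟩ ⟨u, hu⟩ = true := by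
        rw [hz]
        exact decide_eq_true hfix
      have hz' : u • τ s • z = τ s • z := of_decide_eq_true hz'
      show (s : G) • z = (γ s * u * τ s) • z
      rw [mul_assoc, mul_smul, mul_smul u, hz', ← mul_smul, ← h3]
    · intro u hu u' hu' h
      obtain ⟨hu, -⟩ := Finset.mem_filter.1 (Finset.mem_coe.1 hu)
      obtain ⟨hu', -⟩ := Finset.mem_filter.1 (Finset.mem_coe.1 hu')
      simp only [dif_pos hu, dif_pos hu', Subtype.mk.injEq] at h
      exact mul_left_cancel (mul_right_cancel h)
  let bad : Finset G := F.filter fun s => ¬ ∀ g ∈ L⁻¹ * L, ∀ u ∈ K₀, g * u * g⁻¹ * s ∈ F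
  let Φ : G → Y → ℝ := fun s y => (wt G (s • y)).toReal * -Real.log (q (Q (s • y))) +
    C * (((stabCardOn K₀ (τ s • y))⁻¹).toReal - (wt G (τ s • y)).toReal) +
    if s ∈ bad then C else 0
  have hpt : ∀ y, ∑ s : ↥F, -Real.log (q (Q ((s : G) • y))) *
      ((Finset.univ.filter fun s' => r (A y) s s').card : ℝ)⁻¹ ≤ ∑ s ∈ F, Φ s y := by
    intro y
    rw [← Finset.sum_coe_sort F]
    refine Finset.sum_le_sum fun s _ => ?_
    have hcs := hc0 (Q ((s : G) • y))
    have hCs := hC (Q ((s : G) • y))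
    have hd : 0 ≤ ((stabCardOn K₀ (τ s • y))⁻¹).toReal - (wt G (τ s • y)).toReal :=
      sub_nonneg.2 (hwθ _)
    by_cases hs : (s : G) ∈ bad
    · simp only [Φ, if_pos hs]
      have h1 : ((Finset.univ.filter fun s' => r (A y) s s').card : ℝ)⁻¹ ≤ 1 := by
        refine inv_le_one_of_one_le₀ ?_
        have : 0 < (Finset.univ.filter fun s' => r (A y) s s').card :=
          Finset.card_pos.2 ⟨s, by
            rw [Finset.mem_filter]; exact ⟨Finset.mem_univ _, (r (A y)).refl s⟩⟩
        exact_mod_cast this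
      have h2 := mul_le_of_le_one_right hcs h1
      have h3 : 0 ≤ (wt G ((s : G) • y)).toReal * -Real.log (q (Q ((s : G) • y))) :=
        mul_nonneg ENNReal.toReal_nonneg hcs
      have h4 := mul_nonneg hC0 hd
      linarith
    · simp only [Φ, if_neg hs]
      have hgood : ∀ g ∈ L⁻¹ * L, ∀ u ∈ K₀, g * u * g⁻¹ * (s : G) ∈ F := by
        by_contra h
        exact hs (Finset.mem_filter.2 ⟨s.2, h⟩)
      have h1 := mul_le_mul_of_nonneg_left (hclass y s hgood) hcs
      have h2 := mul_le_mul_of_nonneg_right hCs hd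
      have h3 : (wt G ((s : G) • y)).toReal = (wt G (τ s • y)).toReal := by
        rw [wt_smul, wt_smul]
      rw [h3]
      linarith
  have hΦi : ∀ s, Integrable (Φ s) μ ∧ ∫ y, Φ s y ∂μ =
      ∫ y, (wt G y).toReal * -Real.log (q (Q y)) ∂μ +
        C * ∫ y, (((stabCardOn K₀ y)⁻¹).toReal - (wt G y).toReal) ∂μ +
        if s ∈ bad then C else 0 := by
    intro s
    have j1 : Integrable (fun y => (wt G (s • y)).toReal * -Real.log (q (Q (s • y)))) μ :=
      (measurePreserving_smul s μ).integrable_comp_of_integrable hi1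
    have j2 : Integrable (fun y => C * (((stabCardOn K₀ (τ s • y))⁻¹).toReal -
        (wt G (τ s • y)).toReal)) μ :=
      ((measurePreserving_smul (τ s) μ).integrable_comp_of_integrable hi2).const_mul C
    refine ⟨(j1.add j2).add (integrable_const _), ?_⟩
    simp only [Φ]
    have j3 : Integrable (fun y => (wt G (s • y)).toReal * -Real.log (q (Q (s • y))) +
        C * (((stabCardOn K₀ (τ s • y))⁻¹).toReal - (wt G (τ s • y)).toReal)) μ := j1.add j2
    rw [integral_add j3 (integrable_const _), integral_add j1 j2, integral_const_mul,
      integral_smul_eq_self (fun y : Y => (wt G y).toReal * -Real.log (q (Q y))) (g := s),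
      integral_smul_eq_self
        (fun y : Y => ((stabCardOn K₀ y)⁻¹).toReal - (wt G y).toReal) (g := τ s)]
    simp
  refine le_trans (le_of_eq (by congr!)) ((ent_le_of_label μ hA hω r hr hq hq1).trans ?_)
  have hcardlab : Real.log (Fintype.card (↥T → ↥K₀ → Bool)) = T.card * (K₀.card * Real.log 2) := by
    simp
  rw [hcardlab, add_assoc]
  refine add_le_add le_rfl ?_
  refine (integral_mono ?_ (integrable_finsetSum F fun s _ => (hΦi s).1) hpt).trans ?_
  · exact (hA.prodMk hω).integrable_comp μ fun p => ∑ s, -Real.log (q (p.2 s)) *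
        ((Finset.univ.filter fun s' => r p.1 s s').card : ℝ)⁻¹
  rw [integral_finsetSum F fun s _ => (hΦi s).1, Finset.sum_congr rfl fun s _ => (hΦi s).2,
    Finset.sum_add_distrib, Finset.sum_const, nsmul_eq_mul]
  refine add_le_add le_rfl (le_of_eq ?_)
  rw [← Finset.sum_filter, Finset.sum_const, nsmul_eq_mul, mul_comm]
  congr 3
  exact (Finset.filter_mem_eq_inter).trans (Finset.inter_eq_right.2 (Finset.filter_subset _ _))

/-- The entropy rate of the process generated by `Q` is bounded by the cross entropy of `Q`
with respect to `q`, weighted by the inverse of the size of the stabilizer. -/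
theorem exists_ent_le [Countable G] [Infinite G] (μ : Measure Y) [IsProbabilityMeasure μ]
    [SMulInvariantMeasure G Y μ] {α : Type*} [Fintype α] {Q : Y → α} (hQ : FinMeas Q)
    {q : α → ℝ} (hq : ∀ a, 0 < q a) (hq1 : ∑ a, q a ≤ 1) {ε : ℝ} (hε : 0 < ε) :
    ∃ (K : Finset G) (δ : ℝ), 0 < δ ∧ ∀ F, FolnerInv K δ F →
      ent μ (fun y (s : ↥F) => Q ((s : G) • y)) ≤
        (∫ y, (wt G y).toReal * -Real.log (q (Q y)) ∂μ + ε) * F.card := by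
  obtain ⟨C, hC0, hC⟩ : ∃ C : ℝ, 0 ≤ C ∧ ∀ a, -Real.log (q a) ≤ C := by
    have hc0 : ∀ a, 0 ≤ -Real.log (q a) := by
      intro a
      have h1 : q a ≤ 1 :=
        (Finset.single_le_sum (fun b _ => (hq b).le) (Finset.mem_univ a)).trans hq1
      have := Real.log_nonpos (hq a).le h1
      linarith
    exact ⟨∑ a, -Real.log (q a), Finset.sum_nonneg fun a _ => hc0 a,
      fun a => Finset.single_le_sum (f := fun a => -Real.log (q a)) (fun b _ => hc0 b)
        (Finset.mem_univ a)⟩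
  have hC1 : 0 < 3 * (C + 1) := by linarith
  obtain ⟨K₀, hK₀, hK₀ε⟩ := exists_stabCardOn_approx (G := G) μ (div_pos hε hC1)
  obtain ⟨N, hN⟩ := exists_nat_gt (6 * (K₀.card * Real.log 2) / ε)
  obtain ⟨L, hL⟩ := Infinite.exists_subset_card_eq G (N + 1)
  have hLpos : 0 < (L.card : ℝ) := by rw [hL]; positivity
  have hLne : L.Nonempty := Finset.card_pos.1 (by omega)
  let W : Finset G := (L⁻¹ * L).biUnion fun g => K₀.image fun u => g * u * g⁻¹
  have hδ : 0 < min (1 / (L.card : ℝ)) (ε / (3 * (C + 1))) :=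
    lt_min (by positivity) (div_pos hε hC1)
  refine ⟨L ∪ W, min (1 / (L.card : ℝ)) (ε / (3 * (C + 1))), hδ, fun F hF => ?_⟩
  obtain ⟨T, hTF, hTcard, τ, γ, hτ⟩ := exists_separated L F hLne
  have hFpos : (0 : ℝ) < F.card := by exact_mod_cast hF.1.card_pos
  have hLF : ((L * F).card : ℝ) ≤ 2 * F.card := by
    have h1 := card_mul_sdiff_le
      (folnerInv_mono (Finset.subset_union_left : L ⊆ L ∪ W) (min_le_left _ _) hF)
    rw [mul_one_div_cancel hLpos.ne', one_mul] at h1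
    have h2 : ((L * F).card : ℝ) ≤ ((L * F) \ F).card + F.card := by
      exact_mod_cast Finset.card_le_card_sdiff_add_card
    linarith
  have hTle : (T.card : ℝ) * (K₀.card * Real.log 2) ≤ ε / 3 * F.card := by
    have h1 : (T.card : ℝ) * L.card ≤ 2 * F.card :=
      le_trans (by exact_mod_cast hTcard) hLF
    have h2 : 6 * (K₀.card * Real.log 2) ≤ ε * L.card := by
      rw [hL]; push_cast
      rw [div_lt_iff₀ hε] at hN
      nlinarith
    have h3 := mul_le_mul_of_nonneg_left h2 (Nat.cast_nonneg (α := ℝ) T.card)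
    have h4 := mul_le_mul_of_nonneg_left h1 hε.le
    linarith
  have hbad : ((F.filter fun s => ¬ ∀ g ∈ L⁻¹ * L, ∀ u ∈ K₀, g * u * g⁻¹ * s ∈ F).card : ℝ) ≤
      ε / (3 * (C + 1)) * F.card := by
    have h1 := card_bad_le
      (folnerInv_mono (Finset.subset_union_right : W ⊆ L ∪ W) (min_le_right _ _) hF)
    refine le_trans (Nat.cast_le.2 (Finset.card_le_card fun s hs => ?_)) h1
    rw [Finset.mem_filter] at hs ⊢
    refine ⟨hs.1, fun h => hs.2 fun g hg u hu => h _ ?_⟩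
    exact Finset.mem_biUnion.2 ⟨g, hg, Finset.mem_image.2 ⟨u, hu, rfl⟩⟩
  refine (ent_le_of_separated μ hQ hq hq1 hC hK₀ hτ).trans ?_
  have hCε : C * (ε / (3 * (C + 1))) ≤ ε / 3 := by
    rw [mul_div_assoc', div_le_div_iff₀ hC1 (by norm_num)]
    nlinarith
  have h1 := mul_le_mul_of_nonneg_left hK₀ε hC0
  have h2 := mul_le_mul_of_nonneg_left hbad hC0
  have h3 := mul_le_mul_of_nonneg_right (h1.trans hCε) hFpos.le
  have h4 := mul_le_mul_of_nonneg_right hCε hFpos.le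
  linarith

end EntropyBound

section Transport

variable {G : Type*} [Group G] {Y : Type*} [MulAction G Y]

/-- The union of the translates of `B` by the elements of `F`. -/
def spread (F : Finset G) (B : Set Y) : Set Y := {y | ∃ s ∈ F, s⁻¹ • y ∈ B}

lemma smul_mem_spread {F : Finset G} {B : Set Y} {s : G} (hs : s ∈ F) {x : Y} (hx : x ∈ B) :
    s • x ∈ spread F B := ⟨s, hs, by rwa [inv_smul_smul]⟩

variable [MeasurableSpace Y] [MeasurableConstSMul G Y]

lemma measurableSet_spread (F : Finset G) {B : Set Y} (hB : MeasurableSet B) :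
    MeasurableSet (spread F B) := by
  have : spread F B = ⋃ s ∈ F, (fun y => s⁻¹ • y) ⁻¹' B := by
    ext y; simp [spread]
  rw [this]
  exact Finset.measurableSet_biUnion _ fun s _ => measurable_const_smul s⁻¹ hB

lemma measurable_card_filter_smul_mem (F : Finset G) {E : Set Y} (hE : MeasurableSet E) :
    Measurable fun x : Y => ((F.filter fun s => s • x ∈ E).card : ℝ≥0∞) := by
  have : (fun x : Y => ((F.filter fun s => s • x ∈ E).card : ℝ≥0∞)) =
      fun x => ∑ s ∈ F, if s • x ∈ E then 1 else 0 := by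
    ext x; rw [Finset.sum_boole]
  rw [this]
  exact Finset.measurable_fun_sum _ fun s _ =>
    Measurable.ite (measurable_const_smul s hE) measurable_const measurable_const

variable [MeasurableSpace.CountablySeparated Y]

/-- Up to small weighted measure, stabilizers are contained in a fixed finite set. -/
lemma exists_invariant_finite_stab [Countable G] (μ : Measure Y) [IsProbabilityMeasure μ]
    [SMulInvariantMeasure G Y μ] {c : ℝ≥0∞} (hc : c ≠ 0) :
    ∃ (K : Finset G) (V : Set Y), MeasurableSet V ∧ (∀ (g : G), ∀ x ∈ V, g • x ∈ V) ∧
      (∀ x ∈ V, ∀ u : G, u • x = x → u ∈ K) ∧ ∫⁻ x in Vᶜ, wt G x ∂μ ≤ c := by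
  let V : Finset G → Set Y := fun K => {x | ∀ u : G, u ∉ K → ∀ g : G, u • g • x ≠ g • x}
  have hVm : ∀ K, MeasurableSet (V K) := by
    intro K
    have : V K = ⋂ (u : G) (_ : u ∉ K) (g : G), (fun x => g • x) ⁻¹' {x : Y | u • x = x}ᶜ := by
      ext x; simp [V]
    rw [this]
    exact MeasurableSet.iInter fun u => MeasurableSet.iInter fun _ => MeasurableSet.iInter fun g =>
      measurable_const_smul g (measurableSet_fix u).compl
  have hVmono : ∀ K K', K ⊆ K' → V K ⊆ V K' := fun K K' h x hx u hu => hx u fun h' => hu (h h')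
  let A : Finset G → Set Y := fun H => {x | ∀ u : G, u • x = x ↔ u ∈ H}
  have hAm : ∀ H, MeasurableSet (A H) := by
    intro H
    have : A H = ⋂ u : G, if u ∈ H then {x : Y | u • x = x} else {x : Y | u • x = x}ᶜ := by
      ext x
      simp only [A, mem_iInter, mem_ofPred_eq]
      refine forall_congr' fun u => ?_
      by_cases hu : u ∈ H <;> simp [hu]
    rw [this]
    refine MeasurableSet.iInter fun u => ?_
    split_ifs
    · exact measurableSet_fix u
    · exact (measurableSet_fix u).compl
  have hAdisj : Pairwise (Function.onFun Disjoint A) := by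
    intro H H' hne
    rw [Function.onFun, Set.disjoint_left]
    intro x hx hx'
    exact hne (Finset.ext fun u => (hx u).symm.trans (hx' u))
  have hAV : ∀ H, μ (A H) ≠ 0 → ∃ K, A H ⊆ V K := by
    intro H hH
    have hfin : {H' | μ (A H) ≤ μ (A H')}.Finite :=
      Measure.finite_const_le_meas_of_disjoint_iUnion μ (pos_iff_ne_zero.2 hH) hAm hAdisj
        (measure_ne_top _ _)
    refine ⟨hfin.toFinset.biUnion id, fun x hx u hu g hfix => hu ?_⟩
    let H' : Finset G := H.image fun v => g * v * g⁻¹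
    have hpre : (fun y : Y => g • y) ⁻¹' A H' = A H := by
      ext y
      simp only [A, H', mem_preimage, mem_ofPred_eq, Finset.mem_image]
      constructor
      · intro h v
        rw [← smul_left_cancel_iff g, ← mul_smul,
          show (g * v) • y = (g * v * g⁻¹) • g • y by rw [← mul_smul]; group, h]
        constructor
        · rintro ⟨w, hw, hwv⟩
          rwa [← mul_left_cancel (mul_right_cancel hwv)]
        · exact fun hv => ⟨v, hv, rfl⟩
      · intro h v
        rw [← smul_left_cancel_iff g⁻¹, inv_smul_smul,
          show g⁻¹ • v • g • y = (g⁻¹ * v * g) • y by simp only [mul_smul], h]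
        constructor
        · exact fun hv => ⟨_, hv, by group⟩
        · rintro ⟨w, hw, rfl⟩
          convert hw using 1; group
    have hμ : μ (A H') = μ (A H) := by rw [← hpre, measure_preimage_smul]
    refine Finset.mem_biUnion.2 ⟨H', ?_, ?_⟩
    · rw [Set.Finite.mem_toFinset]
      exact hμ.ge
    · have hgx : g • x ∈ A H' := by
        rw [← hpre] at hx
        exact hx
      exact (hgx u).1 hfix
  let ν : Measure Y := μ.withDensity fun x => wt G x
  have hν : IsFiniteMeasure ν := by
    refine isFiniteMeasure_withDensity ?_
    refine ((lintegral_mono fun x => wt_le_one x).trans_lt ?_).ne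
    simp
  have hzero : ν (⋂ K, (V K)ᶜ) = 0 := by
    rw [withDensity_apply _ (MeasurableSet.iInter fun K => (hVm K).compl)]
    rw [← lintegral_indicator (MeasurableSet.iInter fun K => (hVm K).compl)]
    refine lintegral_eq_zero_of_ae_eq_zero ?_
    have h1 : ∀ᵐ x ∂μ, ∀ H, μ (A H) = 0 → x ∉ A H := by
      rw [ae_all_iff]
      intro H
      by_cases h : μ (A H) = 0
      · filter_upwards [measure_eq_zero_iff_ae_notMem.1 h] with x hx _ using hx
      · exact Filter.Eventually.of_forall fun x h' => absurd h' h
    filter_upwards [h1] with x hx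
    by_cases hxV : x ∈ ⋂ K, (V K)ᶜ
    swap
    · rw [Set.indicator_of_notMem hxV]; rfl
    rw [Set.indicator_of_mem hxV]
    by_contra hw
    have hfin : {u : G | u • x = x}.Finite := by
      by_contra hinf
      have hinf : {u : G | u • x = x}.Infinite := hinf
      refine hw (ENNReal.inv_eq_zero.2 ?_)
      refine ENNReal.eq_top_of_forall_nnreal_le fun n => ?_
      obtain ⟨k, hk⟩ := exists_nat_ge n
      obtain ⟨M, hM, hMk⟩ := hinf.exists_subset_card_eq k
      have := card_le_stabCard (G := G) (M := M) (x := x) fun u hu => hM hu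
      rw [hMk] at this
      exact le_trans (by exact_mod_cast hk) this
    have hxA : x ∈ A hfin.toFinset := fun u => by simp
    obtain ⟨K, hK⟩ := hAV hfin.toFinset fun h => hx _ h hxA
    exact mem_iInter.1 hxV K (hK hxA)
  have htend := tendsto_measure_iInter_atTop (μ := ν) (s := fun K => (V K)ᶜ)
    (fun K => (hVm K).compl.nullMeasurableSet)
    (fun K K' h => Set.compl_subset_compl.2 (hVmono K K' h)) ⟨∅, measure_ne_top _ _⟩
  rw [hzero] at htend
  obtain ⟨K, hK⟩ := (htend.eventually (gt_mem_nhds (pos_iff_ne_zero.2 hc))).exists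
  refine ⟨K, V K, hVm K, ?_, ?_, ?_⟩
  · intro g x hx u hu h
    rw [← mul_smul]
    simpa only [mul_smul] using hx u hu (h * g)
  · intro x hx u hfix
    by_contra hu
    exact hx u hu 1 (by simpa using hfix)
  · rw [← withDensity_apply _ (hVm K).compl]
    exact hK.le

/-- Mass transport: both sides count the pairs `(x, s • x)` in `B × E` with `s ∈ F`. -/
lemma lintegral_wt_mul_card [Countable G] (μ : Measure Y) [SMulInvariantMeasure G Y μ]
    (F : Finset G) {B E : Set Y} (hB : MeasurableSet B) (hE : MeasurableSet E) :
    ∫⁻ x in B, wt G x * (F.filter fun s => s • x ∈ E).card ∂μ =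
      ∫⁻ y in E, wt G y * (F.filter fun s => s⁻¹ • y ∈ B).card ∂μ := by
  have hBm : ∀ s : G, Measurable fun y : Y => B.indicator (fun _ => (1 : ℝ≥0∞)) (s • y) :=
    fun s => (measurable_const.indicator hB).comp (measurable_const_smul s)
  have hEm : ∀ s : G, Measurable fun y : Y => E.indicator (fun _ => (1 : ℝ≥0∞)) (s • y) :=
    fun s => (measurable_const.indicator hE).comp (measurable_const_smul s)
  have hm : ∀ g h : G, Measurable fun x : Y => wt G x *
      (B.indicator (fun _ => 1) (g • x) * E.indicator (fun _ => 1) (h • x)) :=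
    fun g h => measurable_wt.mul ((hBm g).mul (hEm h))
  have h1 : ∫⁻ x in B, wt G x * (F.filter fun s => s • x ∈ E).card ∂μ = ∑ s ∈ F,
      ∫⁻ x, wt G x * (B.indicator (fun _ => 1) ((1 : G) • x) * E.indicator (fun _ => 1) (s • x)) ∂μ
      := by
    rw [← lintegral_finsetSum _ fun s _ => hm 1 s,
      ← lintegral_indicator hB]
    refine lintegral_congr fun x => ?_
    rw [← Finset.mul_sum, ← Finset.mul_sum, one_smul]
    have : ∑ s ∈ F, E.indicator (fun _ => (1 : ℝ≥0∞)) (s • x) =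
        (F.filter fun s => s • x ∈ E).card := by
      simp only [Set.indicator_apply]
      rw [Finset.sum_boole]
    rw [this]
    by_cases hx : x ∈ B <;> simp [hx]
  have h2 : ∫⁻ y in E, wt G y * (F.filter fun s => s⁻¹ • y ∈ B).card ∂μ = ∑ s ∈ F,
      ∫⁻ x, wt G x * (B.indicator (fun _ => 1) (s⁻¹ • x) * E.indicator (fun _ => 1) ((1 : G) • x))
        ∂μ := by
    rw [← lintegral_finsetSum _ fun s _ => hm s⁻¹ 1,
      ← lintegral_indicator hE]
    refine lintegral_congr fun x => ?_
    rw [← Finset.mul_sum, ← Finset.sum_mul, one_smul]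
    have : ∑ s ∈ F, B.indicator (fun _ => (1 : ℝ≥0∞)) (s⁻¹ • x) =
        (F.filter fun s => s⁻¹ • x ∈ B).card := by
      simp only [Set.indicator_apply]
      rw [Finset.sum_boole]
    rw [this]
    by_cases hx : x ∈ E <;> simp [hx]
  rw [h1, h2]
  refine Finset.sum_congr rfl fun s _ => ?_
  rw [← (measurePreserving_smul s μ).lintegral_comp (hm s⁻¹ 1)]
  refine lintegral_congr fun x => ?_
  rw [wt_smul, inv_smul_smul, one_smul, one_smul]

lemma exists_cover (M : Finset G) : ∃ C : ℕ → Set Y, (∀ n, MeasurableSet (C n)) ∧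
    (∀ x, ∃ n, x ∈ C n) ∧ ∀ n, ∀ u ∈ M, (∀ x ∈ C n, u • x = x) ∨ ∀ x ∈ C n, u • x ∉ C n := by
  obtain ⟨ι, hι, hinj⟩ := MeasurableSpace.measurable_injection_nat_bool_of_countablySeparated Y
  have hιn : ∀ n b, MeasurableSet {x | ι x n = b} := fun n b =>
    ((measurable_pi_apply n).comp hι) (measurableSet_singleton b)
  let c : G → Option (ℕ × Bool) → Set Y := fun u o =>
    o.elim {x | u • x = x} fun p => {x | ι x p.1 = p.2} ∩ (fun x => u • x) ⁻¹' {x | ι x p.1 = !p.2}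
  have hc : ∀ u o, MeasurableSet (c u o) := by
    rintro u (_ | p)
    · exact measurableSet_fix u
    · exact (hιn _ _).inter (measurable_const_smul u (hιn _ _))
  obtain ⟨e, he⟩ := exists_surjective_nat (↥M → Option (ℕ × Bool))
  refine ⟨fun n => ⋂ u : ↥M, c u (e n u), fun n => MeasurableSet.iInter fun u => hc _ _, ?_, ?_⟩
  · intro x
    have h : ∀ u : ↥M, ∃ o, x ∈ c u o := by
      intro u
      by_cases hu : (u : G) • x = x
      · exact ⟨none, hu⟩
      · have : ι ((u : G) • x) ≠ ι x := fun h => hu (hinj h)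
        obtain ⟨n, hn⟩ := Function.ne_iff.1 this
        refine ⟨some (n, ι x n), rfl, ?_⟩
        exact Bool.eq_not.2 hn
    choose o ho using h
    obtain ⟨n, rfl⟩ := he o
    exact ⟨n, mem_iInter.2 ho⟩
  · intro n u hu
    rcases h : e n ⟨u, hu⟩ with _ | p
    · left
      intro x hx
      have := mem_iInter.1 hx ⟨u, hu⟩
      rw [h] at this
      exact this
    · right
      intro x hx hx'
      have h1 := mem_iInter.1 hx ⟨u, hu⟩
      have h2 := mem_iInter.1 hx' ⟨u, hu⟩
      rw [h] at h1 h2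
      have h3 : ι (u • x) p.1 = !p.2 := h1.2
      have h4 : ι (u • x) p.1 = p.2 := h2.1
      rw [h3] at h4
      simp at h4

end Transport

section Tiling

variable {G : Type*} [Group G] {Y : Type*} [MeasurableSpace Y] [MulAction G Y]

variable (G) in
/-- The measure of `B` weighted by the inverse of the size of the stabilizer. -/
noncomputable def wmass (μ : Measure Y) (B : Set Y) : ℝ := (∫⁻ x in B, wt G x ∂μ).toReal

lemma lintegral_wt_ne_top (μ : Measure Y) [IsFiniteMeasure μ] (B : Set Y) :
    ∫⁻ x in B, wt G x ∂μ ≠ ∞ := by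
  refine ((lintegral_mono fun x => wt_le_one x).trans_lt ?_).ne
  simp

lemma wmass_nonneg (μ : Measure Y) (B : Set Y) : 0 ≤ wmass G μ B := ENNReal.toReal_nonneg

variable [MeasurableConstSMul G Y]

lemma lintegral_card_smul_mem (μ : Measure Y) [SMulInvariantMeasure G Y μ] (F : Finset G)
    {E : Set Y} (hE : MeasurableSet E) :
    ∫⁻ x, ((F.filter fun s => s • x ∈ E).card : ℝ≥0∞) ∂μ = F.card * μ E := by
  have h : ∀ x : Y, ((F.filter fun s => s • x ∈ E).card : ℝ≥0∞) =
      ∑ s ∈ F, ((fun x => s • x) ⁻¹' E).indicator 1 x := by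
    intro x
    rw [← Finset.sum_boole]
    rfl
  simp_rw [h]
  rw [lintegral_finsetSum _ fun s _ => measurable_one.indicator (measurable_const_smul s hE)]
  have h2 : ∀ s ∈ F, ∫⁻ x, ((fun x : Y => s • x) ⁻¹' E).indicator 1 x ∂μ = μ E := by
    intro s _
    rw [lintegral_indicator_one (measurable_const_smul s hE), measure_preimage_smul]
  rw [Finset.sum_congr rfl h2, Finset.sum_const, nsmul_eq_mul]

variable [MeasurableSpace.CountablySeparated Y] [Countable G]

lemma lintegral_wt_mul_card_le (μ : Measure Y) [SMulInvariantMeasure G Y μ]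
    (F : Finset G) {B C Z : Set Y} (hB : MeasurableSet B) (hZ : MeasurableSet Z) (hBC : B ⊆ C)
    (hC : ∀ u ∈ F⁻¹ * F, (∀ x ∈ C, u • x = x) ∨ ∀ x ∈ C, u • x ∉ C) :
    ∫⁻ x in B, wt G x * (F.filter fun s => s • x ∉ Z).card ∂μ ≤ μ (spread F B \ Z) := by
  have h1 := lintegral_wt_mul_card μ F hB hZ.compl
  simp only [mem_compl_iff] at h1
  rw [h1, ← lintegral_indicator hZ.compl,
    ← lintegral_indicator_one ((measurableSet_spread F hB).diff hZ)]
  refine lintegral_mono fun y => ?_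
  by_cases hyZ : y ∈ Z
  · simp [hyZ]
  rw [Set.indicator_of_mem (show y ∈ Zᶜ from hyZ)]
  by_cases hy : y ∈ spread F B
  · rw [Set.indicator_of_mem (show y ∈ spread F B \ Z from ⟨hy, hyZ⟩)]
    refine wt_mul_le_one ?_
    obtain ⟨s₀, hs₀, hys₀⟩ := hy
    have hfix : ∀ s ∈ F.filter fun s => s⁻¹ • y ∈ B, (s * s₀⁻¹) • y = y := by
      intro s hs
      rw [Finset.mem_filter] at hs
      have h2 : (s⁻¹ * s₀) • s₀⁻¹ • y = s⁻¹ • y := by rw [← mul_smul, mul_inv_cancel_right]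
      rcases hC (s⁻¹ * s₀) (Finset.mul_mem_mul (Finset.inv_mem_inv hs.1) hs₀) with h | h
      · have h3 := h _ (hBC hys₀)
        rw [h2] at h3
        rw [mul_smul, ← h3, smul_inv_smul]
      · exact absurd (hBC hs.2) (h2 ▸ h _ (hBC hys₀))
    rw [← Finset.card_image_of_injective _ (mul_left_injective s₀⁻¹)]
    refine card_le_stabCard fun u hu => ?_
    obtain ⟨s, hs, rfl⟩ := Finset.mem_image.1 hu
    exact hfix s hs
  · have : (F.filter fun s => s⁻¹ • y ∈ B) = ∅ := by
      refine Finset.filter_eq_empty_iff.2 fun s hs h => hy ⟨s, hs, h⟩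
    simp [this]

/-- One stage of the quasi-tiling: translates of `F` centred in `D` are added until every point
of `D` sees a proportion `ε` of its translates covered. -/
lemma exists_stage (μ : Measure Y) [IsProbabilityMeasure μ] [SMulInvariantMeasure G Y μ]
    (F : Finset G) {Z D : Set Y} (hZ : MeasurableSet Z) (hD : MeasurableSet D) {ε : ℝ}
    (hε1 : ε ≤ 1) :
    ∃ B ⊆ D, MeasurableSet B ∧
      (1 - ε) * F.card * wmass G μ B ≤ μ.real (spread F B \ Z) ∧
      ∀ x ∈ D, ε * F.card ≤ ((F.filter fun s => s • x ∈ Z ∪ spread F B).card : ℝ) := by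
  obtain ⟨C, hCm, hCcov, hC⟩ := exists_cover (Y := Y) (F⁻¹ * F)
  let b : ℕ → Set Y → Set Y := fun n W =>
    {x | x ∈ C n ∧ x ∈ D ∧ ((F.filter fun s => s • x ∈ W).card : ℝ) < ε * F.card}
  let W : ℕ → Set Y := fun n =>
    Nat.rec (motive := fun _ => Set Y) Z (fun n W => W ∪ spread F (b n W)) n
  have hWs : ∀ n, W (n + 1) = W n ∪ spread F (b n (W n)) := fun n => rfl
  have hbm : ∀ n V, MeasurableSet V → MeasurableSet (b n V) := by
    intro n V hV
    have h1 : Measurable fun x : Y => ((F.filter fun s => s • x ∈ V).card : ℝ) := by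
      simpa using (measurable_card_filter_smul_mem F hV).ennreal_toReal
    exact (hCm n).inter (hD.inter (measurableSet_lt h1 measurable_const))
  have hWm : ∀ n, MeasurableSet (W n) := by
    intro n
    induction n with
    | zero => exact hZ
    | succ n ih => exact ih.union (measurableSet_spread F (hbm n _ ih))
  have hWmono : Monotone W := monotone_nat_of_le_succ fun n => by
    rw [hWs]; exact subset_union_left
  let B : Set Y := ⋃ n, b n (W n)
  have hBm : MeasurableSet B := MeasurableSet.iUnion fun n => hbm n _ (hWm n)
  have hWsub : ∀ n, W n ⊆ Z ∪ spread F B := by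
    intro n
    induction n with
    | zero => exact subset_union_left
    | succ n ih =>
      rw [hWs]
      refine union_subset ih ?_
      rintro y ⟨s, hs, hy⟩
      exact Or.inr ⟨s, hs, mem_iUnion.2 ⟨n, hy⟩⟩
  refine ⟨B, ?_, hBm, ?_, ?_⟩
  · intro x hx
    obtain ⟨n, hn⟩ := mem_iUnion.1 hx
    exact hn.2.1
  · have hstep : ∀ n, ENNReal.ofReal ((1 - ε) * F.card) * ∫⁻ x in b n (W n), wt G x ∂μ ≤
        μ (W (n + 1) \ W n) := by
      intro n
      have h1 := lintegral_wt_mul_card_le μ F (hbm n _ (hWm n)) (hWm n)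
        (fun x hx => hx.1 : b n (W n) ⊆ C n) (hC n)
      rw [hWs, Set.union_sdiff_left]
      refine le_trans ?_ h1
      rw [← lintegral_const_mul _ measurable_wt]
      refine setLIntegral_mono' (hbm n _ (hWm n)) fun x hx => ?_
      rw [mul_comm]
      refine mul_le_mul_right ?_ _
      rw [← ENNReal.ofReal_natCast]
      refine ENNReal.ofReal_le_ofReal ?_
      have h2 : ((F.filter fun s : G => s • x ∈ W n).card : ℝ) +
          (F.filter fun s : G => s • x ∉ W n).card = F.card := by
        exact_mod_cast Finset.card_filter_add_card_filter_not (s := F) (fun s : G => s • x ∈ W n)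
      have h3 := hx.2.2
      linarith
    have hdisj : Pairwise (Function.onFun Disjoint fun n => W (n + 1) \ W n) := by
      have key : ∀ n m, n < m → Disjoint (W (n + 1) \ W n) (W (m + 1) \ W m) := by
        intro n m hnm
        rw [Set.disjoint_left]
        exact fun x hx hx' => hx'.2 (hWmono (Nat.succ_le_of_lt hnm) hx.1)
      intro n m hnm
      rcases lt_or_gt_of_ne hnm with h | h
      · exact key n m h
      · exact (key m n h).symm
    have hsum : ENNReal.ofReal ((1 - ε) * F.card) * ∫⁻ x in B, wt G x ∂μ ≤
        μ (spread F B \ Z) := by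
      calc ENNReal.ofReal ((1 - ε) * F.card) * ∫⁻ x in B, wt G x ∂μ
          ≤ ENNReal.ofReal ((1 - ε) * F.card) * ∑' n, ∫⁻ x in b n (W n), wt G x ∂μ :=
            mul_le_mul_right (lintegral_iUnion_le _ _) _
        _ = ∑' n, ENNReal.ofReal ((1 - ε) * F.card) * ∫⁻ x in b n (W n), wt G x ∂μ :=
            ENNReal.tsum_mul_left.symm
        _ ≤ ∑' n, μ (W (n + 1) \ W n) := ENNReal.tsum_le_tsum hstep
        _ = μ (⋃ n, W (n + 1) \ W n) :=
            (measure_iUnion hdisj fun n => (hWm (n + 1)).diff (hWm n)).symm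
        _ ≤ μ (spread F B \ Z) := by
            refine measure_mono (iUnion_subset fun n x hx => ?_)
            have hxZ : x ∉ Z := fun h => hx.2 (hWmono (Nat.zero_le n) h)
            exact ⟨(hWsub (n + 1) hx.1).resolve_left hxZ, hxZ⟩
    have h0 : 0 ≤ (1 - ε) * (F.card : ℝ) := mul_nonneg (by linarith) (Nat.cast_nonneg _)
    have := ENNReal.toReal_mono (measure_ne_top _ _) hsum
    rwa [ENNReal.toReal_mul, ENNReal.toReal_ofReal h0] at this
  · intro x hx
    obtain ⟨n, hn⟩ := hCcov x
    by_cases hxb : x ∈ b n (W n)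
    · have : (F.filter fun s => s • x ∈ Z ∪ spread F B) = F := by
        refine Finset.filter_true_of_mem fun s hs => Or.inr ?_
        exact smul_mem_spread hs (mem_iUnion.2 ⟨n, hxb⟩)
      rw [this]
      exact mul_le_of_le_one_left (Nat.cast_nonneg _) hε1
    · have h1 : ε * F.card ≤ ((F.filter fun s => s • x ∈ W n).card : ℝ) := by
        by_contra h
        exact hxb ⟨hn, hx, not_le.1 h⟩
      refine h1.trans (Nat.cast_le.2 (Finset.card_le_card ?_))
      exact Finset.monotone_filter_right _ fun s _ hs => hWsub n hs

/-- The points of an invariant set with uniformly bounded stabilizers which lie outside of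
`spread F B` but have an `E`-translate inside have small measure. -/
lemma measure_boundary_le (μ : Measure Y) [IsProbabilityMeasure μ] [SMulInvariantMeasure G Y μ]
    {K : Finset G} {V : Set Y} (hVinv : ∀ (g : G), ∀ x ∈ V, g • x ∈ V)
    (hVK : ∀ x ∈ V, ∀ u : G, u • x = x → u ∈ K) (E F : Finset G) {B : Set Y}
    (hB : MeasurableSet B) :
    μ {x | x ∈ V ∧ x ∉ spread F B ∧ ∃ s ∈ E, s • x ∈ spread F B} ≤
      ((E⁻¹ * K * F) \ F).card * ∫⁻ x in B, wt G x ∂μ := by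
  let M : Finset G := (E⁻¹ * K * F) \ F
  have h1 := lintegral_wt_mul_card μ M hB MeasurableSet.univ
  simp only [mem_univ, Finset.filter_true, setLIntegral_univ] at h1
  rw [lintegral_mul_const _ measurable_wt] at h1
  rw [mul_comm, h1]
  let f : Y → ℝ≥0∞ := fun y => wt G y * (M.filter fun s => s⁻¹ • y ∈ B).card
  refine le_trans (measure_mono (t := {x | 1 ≤ f x}) ?_) ?_
  · rintro x ⟨hxV, hxF, s, hs, t, ht, hb⟩
    set b : Y := t⁻¹ • s • x with hbdef
    have hxb : x = (s⁻¹ * t) • b := by rw [hbdef, mul_smul, smul_inv_smul, inv_smul_smul]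
    have hstab : stabCard G x = stabCard G b := by rw [hxb, stabCard_smul]
    let S : Finset G := (K.image fun v => t⁻¹ * v * t).filter fun v => v • b = b
    have hS : stabCard G b = S.card := by
      rw [stabCard, tsum_eq_sum (s := S)]
      · rw [Finset.sum_boole, Finset.filter_true_of_mem]
        exact fun v hv => (Finset.mem_filter.1 hv).2
      · intro v hv
        refine if_neg fun hfix => hv (Finset.mem_filter.2 ⟨Finset.mem_image.2 ?_, hfix⟩)
        refine ⟨t * v * t⁻¹, hVK (s • x) (hVinv s x hxV) _ ?_, by group⟩
        have : s • x = t • b := by rw [hbdef, smul_inv_smul]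
        rw [this, ← mul_smul, inv_mul_cancel_right, mul_smul, hfix]
    refine one_le_wt_mul ?_ ?_
    · rw [hstab, hS]
      refine Nat.cast_le.2 ?_
      refine Finset.card_le_card_of_injOn (fun v => s⁻¹ * t * v) ?_ ?_
      · intro v hv
        obtain ⟨hv, hfix⟩ := Finset.mem_filter.1 (Finset.mem_coe.1 hv)
        obtain ⟨w, hw, rfl⟩ := Finset.mem_image.1 hv
        have hxu : (s⁻¹ * t * (t⁻¹ * w * t)) • b = x := by rw [mul_smul, hfix, ← hxb]
        have hmem : (s⁻¹ * t * (t⁻¹ * w * t))⁻¹ • x ∈ B := by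
          rw [inv_smul_eq_iff.2 hxu.symm]
          exact hb
        refine Finset.mem_coe.2 (Finset.mem_filter.2 ⟨Finset.mem_sdiff.2 ⟨?_, ?_⟩, hmem⟩)
        · show s⁻¹ * t * (t⁻¹ * w * t) ∈ _
          rw [show s⁻¹ * t * (t⁻¹ * w * t) = s⁻¹ * w * t by group]
          exact Finset.mul_mem_mul (Finset.mul_mem_mul (Finset.inv_mem_inv hs) hw) ht
        · exact fun h => hxF ⟨_, h, hmem⟩
      · exact fun v _ v' _ h => mul_left_cancel h
    · rw [hstab, hS]
      exact ENNReal.natCast_ne_top _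
  · have hcard : Measurable fun y : Y => ((M.filter fun s => s⁻¹ • y ∈ B).card : ℝ≥0∞) := by
      have : (fun y : Y => ((M.filter fun s => s⁻¹ • y ∈ B).card : ℝ≥0∞)) =
          fun x => ∑ s ∈ M, if s⁻¹ • x ∈ B then 1 else 0 := by
        ext x; rw [Finset.sum_boole]
      rw [this]
      exact Finset.measurable_fun_sum _ fun s _ =>
        Measurable.ite (measurable_const_smul s⁻¹ hB) measurable_const measurable_const
    have := mul_meas_ge_le_lintegral (μ := μ) (measurable_wt.mul hcard : Measurable f) 1
    rwa [one_mul] at this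

end Tiling

section Iteration

variable {G : Type*} [Group G] {Y : Type*} [MeasurableSpace Y] [MulAction G Y]
  [MeasurableConstSMul G Y]

lemma measure_interior_le (μ : Measure Y) [IsProbabilityMeasure μ] [SMulInvariantMeasure G Y μ]
    {V : Set Y} (hV : MeasurableSet V) (hVinv : ∀ (g : G), ∀ x ∈ V, g • x ∈ V) {E : Finset G}
    (hE : E.Nonempty) {Z Z' I : Set Y} (hZ : MeasurableSet Z) (hZ' : MeasurableSet Z')
    (hI : MeasurableSet I) (hIV : I ⊆ V) (hIZ : ∀ x ∈ I, ∀ s ∈ E, s • x ∉ Z) {ε : ℝ}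
    (hIε : ∀ x ∈ I, ε * E.card ≤ ((E.filter fun s => s • x ∈ Z').card : ℝ)) :
    ε * μ.real I ≤ μ.real (V ∩ (Z' \ Z)) := by
  have hEpos : (0 : ℝ) < E.card := by exact_mod_cast hE.card_pos
  have h1 : ENNReal.ofReal (ε * E.card) * μ I ≤ E.card * μ (V ∩ (Z' \ Z)) := by
    rw [← lintegral_card_smul_mem μ E (hV.inter (hZ'.diff hZ)), ← lintegral_indicator_const hI]
    refine lintegral_mono fun x => ?_
    by_cases hx : x ∈ I
    · rw [Set.indicator_of_mem hx, ← ENNReal.ofReal_natCast]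
      refine ENNReal.ofReal_le_ofReal ((hIε x hx).trans (Nat.cast_le.2 (Finset.card_le_card ?_)))
      intro s hs
      obtain ⟨hs, hsx⟩ := Finset.mem_filter.1 hs
      simp only [Finset.mem_filter]
      exact ⟨hs, hVinv s x (hIV hx), hsx, hIZ x hx s hs⟩
    · rw [Set.indicator_of_notMem hx]
      exact zero_le
  have h2 := ENNReal.toReal_mono (ENNReal.mul_ne_top (by simp) (measure_ne_top _ _)) h1
  rw [ENNReal.toReal_mul, ENNReal.toReal_mul, ENNReal.toReal_natCast] at h2
  have h3 : ε * E.card * μ.real I ≤ E.card * μ.real (V ∩ (Z' \ Z)) := by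
    refine le_trans ?_ h2
    refine mul_le_mul_of_nonneg_right ?_ measureReal_nonneg
    rw [ENNReal.toReal_ofReal']
    exact le_max_left _ _
  nlinarith

variable [MeasurableSpace.CountablySeparated Y] [Countable G]

/-- A weighted Ornstein–Weiss quasi-tiling. -/
theorem exists_tiling (μ : Measure Y) [IsProbabilityMeasure μ] [SMulInvariantMeasure G Y μ]
    {K : Finset G} {V : Set Y} (hV : MeasurableSet V) (hVinv : ∀ (g : G), ∀ x ∈ V, g • x ∈ V)
    (hVK : ∀ x ∈ V, ∀ u : G, u • x = x → u ∈ K) (k : ℕ) (E : ℕ → Finset G) (D : ℕ → Set Y)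
    (hE : ∀ i < k, (E i).Nonempty) (hD : ∀ i, MeasurableSet (D i)) {ε δ : ℝ} (hε0 : 0 < ε)
    (hε1 : ε < 1) (hδ : 0 ≤ δ) (hDδ : ∀ i < k, 1 - δ ≤ μ.real (D i))
    (hEE : ∀ i j, i < j → j < k →
      ((((E j)⁻¹ * K * E i) \ E i).card : ℝ) ≤ δ * (E i).card) :
    ∃ B : ℕ → Set Y, (∀ i, MeasurableSet (B i)) ∧ (∀ i, B i ⊆ D i) ∧
      (1 - ε) * ∑ i ∈ Finset.range k, (E i).card * wmass G μ (B i) ≤ 1 ∧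
      μ.real (V \ ⋃ i ∈ Finset.range k, spread (E i) (B i)) ≤
        (1 - ε) ^ k + (δ + δ / (1 - ε)) := by
  have hst : ∀ (Z : Set Y) (n : ℕ), ∃ B, MeasurableSet Z → B ⊆ D n ∩ V ∧ MeasurableSet B ∧
      (1 - ε) * (E n).card * wmass G μ B ≤ μ.real (spread (E n) B \ Z) ∧
      ∀ x ∈ D n ∩ V, ε * (E n).card ≤
        (((E n).filter fun s => s • x ∈ Z ∪ spread (E n) B).card : ℝ) := by
    intro Z n
    by_cases hZ : MeasurableSet Z
    · obtain ⟨B, h⟩ := exists_stage μ (E n) hZ ((hD n).inter hV) hε1.le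
      exact ⟨B, fun _ => h⟩
    · exact ⟨∅, fun h => absurd h hZ⟩
  choose b hb using hst
  let Z : ℕ → Set Y := fun n =>
    Nat.rec (motive := fun _ => Set Y) ∅ (fun n Z => Z ∪ spread (E n) (b Z n)) n
  let B : ℕ → Set Y := fun n => b (Z n) n
  have hZs : ∀ n, Z (n + 1) = Z n ∪ spread (E n) (B n) := fun n => rfl
  have hZm : ∀ n, MeasurableSet (Z n) := by
    intro n
    induction n with
    | zero => exact MeasurableSet.empty
    | succ n ih => exact ih.union (measurableSet_spread _ (hb _ n ih).2.1)
  have hBm : ∀ n, MeasurableSet (B n) := fun n => (hb _ n (hZm n)).2.1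
  have hZeq : ∀ n, Z n = ⋃ i ∈ Finset.range n, spread (E i) (B i) := by
    intro n
    induction n with
    | zero => simp [Z]
    | succ n ih =>
      rw [hZs, ih, Finset.range_add_one, Finset.set_biUnion_insert, union_comm]
  have hmass : ∀ n, (1 - ε) * ∑ i ∈ Finset.range n, (E i).card * wmass G μ (B i) ≤
      μ.real (Z n) := by
    intro n
    induction n with
    | zero => simp
    | succ n ih =>
      have h1 := (hb _ n (hZm n)).2.2.1
      have h2 : μ.real (Z (n + 1)) = μ.real (Z n) + μ.real (spread (E n) (B n) \ Z n) := by
        rw [hZs, ← Set.union_sdiff_self,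
          measureReal_union disjoint_sdiff_right ((measurableSet_spread _ (hBm n)).diff (hZm n))]
      rw [Finset.sum_range_succ, mul_add, h2]
      refine add_le_add ih ?_
      rw [← mul_assoc]
      exact h1
  have hmass1 : ∀ n, ∑ i ∈ Finset.range n, (E i).card * wmass G μ (B i) ≤ 1 / (1 - ε) := by
    intro n
    rw [le_div_iff₀ (by linarith), mul_comm]
    exact (hmass n).trans measureReal_le_one
  have hbd : ∀ n < k, μ.real {x | x ∈ V ∧ x ∉ Z n ∧ ∃ s ∈ E n, s • x ∈ Z n} ≤ δ / (1 - ε) := by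
    intro n hn
    have hsub : {x | x ∈ V ∧ x ∉ Z n ∧ ∃ s ∈ E n, s • x ∈ Z n} ⊆
        ⋃ i ∈ Finset.range n, {x | x ∈ V ∧ x ∉ spread (E i) (B i) ∧
          ∃ s ∈ E n, s • x ∈ spread (E i) (B i)} := by
      rintro x ⟨hxV, hxZ, s, hs, hsx⟩
      rw [hZeq] at hxZ hsx
      simp only [mem_iUnion, exists_prop, not_exists, not_and] at hxZ hsx ⊢
      obtain ⟨i, hi, hi'⟩ := hsx
      exact ⟨i, hi, hxV, hxZ i hi, s, hs, hi'⟩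
    refine (measureReal_mono hsub (measure_ne_top _ _)).trans ((measureReal_biUnion_finset_le _ _).trans ?_)
    have h1 : ∀ i ∈ Finset.range n, μ.real {x | x ∈ V ∧ x ∉ spread (E i) (B i) ∧
        ∃ s ∈ E n, s • x ∈ spread (E i) (B i)} ≤ δ * ((E i).card * wmass G μ (B i)) := by
      intro i hi
      rw [Finset.mem_range] at hi
      have h2 := ENNReal.toReal_mono
        (ENNReal.mul_ne_top (ENNReal.natCast_ne_top _) (lintegral_wt_ne_top μ (B i)))
        (measure_boundary_le μ hVinv hVK (E n) (E i) (hBm i))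
      rw [ENNReal.toReal_mul, ENNReal.toReal_natCast] at h2
      refine h2.trans ?_
      rw [← mul_assoc]
      exact mul_le_mul_of_nonneg_right (hEE i n hi hn) (wmass_nonneg μ _)
    refine (Finset.sum_le_sum h1).trans ?_
    rw [← Finset.mul_sum, div_eq_mul_one_div]
    exact mul_le_mul_of_nonneg_left (hmass1 n) hδ
  have hrem : ∀ n ≤ k, μ.real (V \ Z n) ≤ (1 - ε) ^ n + (δ + δ / (1 - ε)) := by
    intro n
    induction n with
    | zero =>
      intro _
      have : 0 ≤ δ / (1 - ε) := div_nonneg hδ (by linarith)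
      have : μ.real (V \ Z 0) ≤ 1 := measureReal_le_one
      rw [pow_zero]; linarith
    | succ n ih =>
      intro hn
      have ih := ih (by omega)
      let I : Set Y := (V ∩ D n) \ (⋃ s ∈ E n, (fun x => s • x) ⁻¹' Z n)
      have hIm : MeasurableSet I := (hV.inter (hD n)).diff
        (Finset.measurableSet_biUnion _ fun s _ => measurable_const_smul s (hZm n))
      have h1 : ε * μ.real I ≤ μ.real (V ∩ (Z (n + 1) \ Z n)) := by
        refine measure_interior_le μ hV hVinv (hE n hn) (hZm n) (hZm (n + 1)) hIm
          (fun x hx => hx.1.1) (fun x hx s hs hsx => hx.2 (mem_iUnion₂.2 ⟨s, hs, hsx⟩)) ?_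
        intro x hx
        convert (hb _ n (hZm n)).2.2.2 x ⟨hx.1.2, hx.1.1⟩
      have h2 : μ.real (V \ Z n) ≤ μ.real I + δ + δ / (1 - ε) := by
        have hsub : V \ Z n ⊆ (I ∪ (D n)ᶜ) ∪
            {x | x ∈ V ∧ x ∉ Z n ∧ ∃ s ∈ E n, s • x ∈ Z n} := by
          intro x hx
          by_cases hxs : ∃ s ∈ E n, s • x ∈ Z n
          · exact Or.inr ⟨hx.1, hx.2, hxs⟩
          · by_cases hxD : x ∈ D n
            · refine Or.inl (Or.inl ⟨⟨hx.1, hxD⟩, fun h => hxs ?_⟩)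
              obtain ⟨s, hs, h⟩ := mem_iUnion₂.1 h
              exact ⟨s, hs, h⟩
            · exact Or.inl (Or.inr hxD)
        have h3 := (measureReal_mono hsub).trans (measureReal_union_le (μ := μ) _ _)
        have h4 := measureReal_union_le (μ := μ) I (D n)ᶜ
        have h5 : μ.real (D n)ᶜ = 1 - μ.real (D n) := probReal_compl_eq_one_sub (hD n)
        have h6 := hDδ n hn
        have h7 := hbd n hn
        linarith
      have h3 : μ.real (V \ Z n) = μ.real (V \ Z (n + 1)) + μ.real (V ∩ (Z (n + 1) \ Z n)) := by
        rw [← measureReal_union _ (hV.inter ((hZm (n + 1)).diff (hZm n)))]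
        · congr 1
          ext x
          rw [hZs]
          simp only [mem_sdiff, mem_union, mem_inter_iff]
          tauto
        · rw [Set.disjoint_left]
          exact fun x hx hx' => hx.2 hx'.2.1
      rw [pow_succ]
      nlinarith
  refine ⟨B, hBm, fun i => (hb _ i (hZm i)).1.trans inter_subset_left,
    (hmass k).trans measureReal_le_one, ?_⟩
  rw [← hZeq]
  exact hrem k le_rfl

end Iteration

section Weights

/-- The probability vector on `Option T` giving mass `κ` to `T`, uniformly distributed. -/
noncomputable def optWt {T : Type*} [Fintype T] (κ : ℝ) : Option T → ℝ
  | none => 1 - κ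
  | some _ => κ / Fintype.card T

variable {T : Type*} [Fintype T] [Nonempty T] {κ : ℝ}

lemma optWt_pos (h0 : 0 < κ) (h1 : κ < 1) : ∀ o : Option T, 0 < optWt κ o
  | none => by simpa [optWt] using h1
  | some _ => div_pos h0 (by exact_mod_cast Fintype.card_pos)

lemma sum_optWt (κ : ℝ) : ∑ o : Option T, optWt κ o = 1 := by
  have : (Fintype.card T : ℝ) ≠ 0 := by exact_mod_cast Fintype.card_ne_zero
  rw [Fintype.sum_option]
  simp only [optWt, Finset.sum_const, Finset.card_univ, nsmul_eq_mul]
  field_simp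
  ring

lemma neg_log_optWt_nonneg (h0 : 0 < κ) (h1 : κ < 1) (o : Option T) :
    0 ≤ -Real.log (optWt κ o) := by
  have h2 : optWt κ o ≤ 1 := by
    rw [← sum_optWt (T := T) κ]
    exact Finset.single_le_sum (fun o _ => (optWt_pos h0 h1 o).le) (Finset.mem_univ o)
  linarith [Real.log_nonpos (optWt_pos h0 h1 o).le h2]

end Weights

section Coding

variable {G : Type*} [Group G]

/-- A Følner set stays invariant when enlarged by a fixed finite set. -/
lemma exists_folnerInv_mul (K K₁ : Finset G) (hK₁ : 1 ∈ K₁) {δ η : ℝ} (hδ : 0 < δ) (hη : 0 < η) :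
    ∃ (K' : Finset G) (δ' : ℝ), 0 < δ' ∧ ∀ F, FolnerInv K' δ' F →
      FolnerInv K δ (K₁ * F) ∧ ((K₁ * F).card : ℝ) ≤ (1 + η) * F.card := by
  have hc : (0 : ℝ) < K₁.card + 1 := by positivity
  refine ⟨K ∪ K₁, min δ η / (K₁.card + 1), div_pos (lt_min hδ hη) hc, fun F hF => ?_⟩
  set δ' := min δ η / (K₁.card + 1) with hδ'
  have hδ'e : K₁.card * δ' + δ' = min δ η := by rw [hδ']; field_simp
  have hδ'0 : 0 < δ' := div_pos (lt_min hδ hη) hc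
  have hsub : F ⊆ K₁ * F := fun s hs => by
    simpa using Finset.mul_mem_mul hK₁ hs
  have h1 := card_mul_sdiff_le (folnerInv_mono Finset.subset_union_right le_rfl hF)
  have h2 : ((K₁ * F).card : ℝ) ≤ (1 + K₁.card * δ') * F.card := by
    have : ((K₁ * F) \ F).card + F.card = (K₁ * F).card := Finset.card_sdiff_add_card_eq_card hsub
    have : (((K₁ * F) \ F).card : ℝ) + F.card = (K₁ * F).card := by exact_mod_cast this
    linarith
  have hF0 : (0 : ℝ) ≤ F.card := Nat.cast_nonneg _
  refine ⟨⟨hF.1.mono hsub, ?_⟩, h2.trans ?_⟩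
  · have h3 := (folnerInv_mono Finset.subset_union_left le_rfl hF : FolnerInv K δ' F).2
    have h4 : ((F : Set G) ∩ {s | ∀ g ∈ K, g * s ∈ F}).ncard ≤
        (((K₁ * F : Finset G) : Set G) ∩ {s | ∀ g ∈ K, g * s ∈ K₁ * F}).ncard := by
      refine Set.ncard_le_ncard ?_ ((Finset.finite_toSet _).subset inter_subset_left)
      exact fun s hs => ⟨hsub hs.1, fun g hg => hsub (hs.2 g hg)⟩
    refine le_trans ?_ (Nat.cast_le.2 h4)
    refine le_trans ?_ h3
    rcases le_total δ 1 with hd | hd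
    · have h5 := min_le_left δ η
      have h6 : 0 ≤ K₁.card * δ' := by positivity
      have h7 : (1 - δ) * (1 + K₁.card * δ') ≤ 1 - δ' := by nlinarith
      calc (1 - δ) * ((K₁ * F).card : ℝ) ≤ (1 - δ) * ((1 + K₁.card * δ') * F.card) :=
            mul_le_mul_of_nonneg_left h2 (by linarith)
        _ = (1 - δ) * (1 + K₁.card * δ') * F.card := by ring
        _ ≤ (1 - δ') * F.card := mul_le_mul_of_nonneg_right h7 hF0
    · have h5 := min_le_left δ η
      have h6 : (1 - δ) * ((K₁ * F).card : ℝ) ≤ (1 - δ) * F.card :=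
        mul_le_mul_of_nonpos_left (by exact_mod_cast Finset.card_le_card hsub) (by linarith)
      have h7 : 0 ≤ K₁.card * δ' := by positivity
      refine h6.trans (mul_le_mul_of_nonneg_right ?_ hF0)
      linarith
  · have h5 := min_le_right δ η
    exact mul_le_mul_of_nonneg_right (by linarith) hF0

variable {Y : Type*} [MeasurableSpace Y] [MulAction G Y]

/-- The part of `Y` covered by the members of the join of the cover `U` over a finite set of
group elements which are indexed by a given finite set of names. -/
def covered {m : ℕ} (U : Fin m → Set Y) (x : Σ F : Finset G, Finset (↥F → Fin m)) : Set Y :=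
  {y | ∃ f ∈ x.2, ∀ s : ↥x.1, (s : G) • y ∈ U (f s)}

variable [MeasurableConstSMul G Y]

lemma measurableSet_covered {m : ℕ} {U : Fin m → Set Y} (hU : ∀ i, MeasurableSet (U i))
    (x : Σ F : Finset G, Finset (↥F → Fin m)) : MeasurableSet (covered U x) := by
  have : covered U x = ⋃ f ∈ x.2, ⋂ s : ↥x.1, (fun y => (s : G) • y) ⁻¹' U (f s) := by
    ext y; simp [covered]
  rw [this]
  exact Finset.measurableSet_biUnion _ fun f _ => MeasurableSet.iInter fun s =>
    measurable_const_smul (s : G) (hU _)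

variable [MeasurableSpace.CountablySeparated Y] [Countable G]

lemma integral_wt_mul_optWt_le (μ : Measure Y) [IsProbabilityMeasure μ] {T : Type*} [Fintype T]
    [Nonempty T] {κ : ℝ} (h0 : 0 < κ) (h1 : κ < 1) {f : Y → Option T} (hf : FinMeas f)
    {B : Set Y} (hB : MeasurableSet B) (hfB : ∀ y, y ∉ B → f y = none) :
    Integrable (fun y => (wt G y).toReal * -Real.log (optWt κ (f y))) μ ∧
    ∫ y, (wt G y).toReal * -Real.log (optWt κ (f y)) ∂μ ≤
      -Real.log (1 - κ) + wmass G μ B * (Real.log (Fintype.card T) - Real.log κ) := by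
  have hw : ∀ y : Y, (wt G y).toReal ≤ 1 := fun y =>
    ENNReal.toReal_le_of_le_ofReal zero_le_one (by simpa using wt_le_one y)
  have hwi : Integrable (fun y : Y => (wt G y).toReal) μ :=
    Integrable.of_bound measurable_wt.ennreal_toReal.aestronglyMeasurable 1
      (Filter.Eventually.of_forall fun y => by
        rw [Real.norm_of_nonneg ENNReal.toReal_nonneg]; exact hw y)
  have hi : Integrable (fun y => (wt G y).toReal * -Real.log (optWt κ (f y))) μ :=
    (hf.integrable_comp μ fun o => -Real.log (optWt κ o)).bdd_mul
      (c := 1) measurable_wt.ennreal_toReal.aestronglyMeasurable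
      (Filter.Eventually.of_forall fun y => by
        rw [Real.norm_of_nonneg ENNReal.toReal_nonneg]; exact hw y)
  refine ⟨hi, ?_⟩
  set c := Real.log (Fintype.card T) - Real.log κ with hc
  have hcard : (1 : ℝ) ≤ Fintype.card T := by exact_mod_cast Fintype.card_pos (α := T)
  have hc0 : 0 ≤ c := sub_nonneg.2 (Real.log_le_log h0 (h1.le.trans hcard))
  have hk0 : 0 ≤ -Real.log (1 - κ) := by
    linarith [Real.log_nonpos (by linarith : 0 ≤ 1 - κ) (by linarith)]
  have hj : Integrable (B.indicator fun y : Y => (wt G y).toReal) μ := hwi.indicator hB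
  have hj' : Integrable (fun y => -Real.log (1 - κ) +
      B.indicator (fun y : Y => (wt G y).toReal) y * c) μ :=
    (integrable_const _).add (hj.mul_const c)
  have hpt : ∀ y, (wt G y).toReal * -Real.log (optWt κ (f y)) ≤
      -Real.log (1 - κ) + B.indicator (fun y : Y => (wt G y).toReal) y * c := by
    intro y
    have hy0 : 0 ≤ (wt G y).toReal := ENNReal.toReal_nonneg
    by_cases hy : y ∈ B
    · rw [Set.indicator_of_mem hy]
      rcases f y with _ | a
      · have := mul_nonneg hy0 hc0
        have := mul_le_mul_of_nonneg_right (hw y) hk0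
        simp only [optWt]
        linarith
      · have h2 : -Real.log (optWt κ (some a)) = c := by
          rw [optWt, Real.log_div h0.ne' (by linarith), hc]; ring
        rw [h2]
        linarith
    · rw [Set.indicator_of_notMem hy, hfB y hy, zero_mul, add_zero]
      have := mul_le_mul_of_nonneg_right (hw y) hk0
      simp only [optWt]
      linarith
  refine (integral_mono hi hj' hpt).trans (le_of_eq ?_)
  rw [integral_add (integrable_const _) (hj.mul_const c), integral_const, probReal_univ, one_smul,
    integral_mul_const, integral_indicator hB, integral_toReal measurable_wt.aemeasurable
      (Filter.Eventually.of_forall fun y => (wt_le_one y).trans_lt ENNReal.one_lt_top), wmass]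

end Coding

section Partition

variable {G : Type*} [Group G] {Y : Type*} [MeasurableSpace Y] [MulAction G Y]
  [MeasurableConstSMul G Y]

/-- A partition which can be read off from finitely many translates of `Q` has entropy rate at
most that of `Q`. -/
lemma exists_ent_factor_le (μ : Measure Y) [IsProbabilityMeasure μ] {α β : Type*} [Fintype α]
    [Fintype β] {Q : Y → α} (hQ : FinMeas Q) {K₁ : Finset G} (hK₁ : 1 ∈ K₁)
    (φ : (↥K₁ → α) → β) {v η : ℝ} (hv : 0 < v) (hη : 0 < η)
    (hQv : ∃ (K : Finset G) (δ : ℝ), 0 < δ ∧ ∀ F, FolnerInv K δ F →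
      ent μ (fun y (s : ↥F) => Q ((s : G) • y)) ≤ v * F.card) :
    ∃ (K : Finset G) (δ : ℝ), 0 < δ ∧ ∀ F, FolnerInv K δ F →
      ent μ (fun y (s : ↥F) => φ fun g : ↥K₁ => Q ((g : G) • (s : G) • y)) ≤
        (v + η) * F.card := by
  obtain ⟨K, δ, hδ, h⟩ := hQv
  obtain ⟨K', δ', hδ', h'⟩ := exists_folnerInv_mul K K₁ hK₁ hδ (div_pos hη hv)
  refine ⟨K', δ', hδ', fun F hF => ?_⟩
  obtain ⟨h1, h2⟩ := h' F hF
  have hm : FinMeas fun y (u : ↥(K₁ * F)) => Q ((u : G) • y) :=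
    FinMeas.pi fun u => hQ.comp_measurable (measurable_const_smul (u : G))
  have h3 := ent_comp_le μ hm fun ω (s : ↥F) =>
    φ fun g : ↥K₁ => ω ⟨g * s, Finset.mul_mem_mul g.2 s.2⟩
  simp only [mul_smul] at h3
  refine h3.trans ((h _ h1).trans ?_)
  calc v * ((K₁ * F).card : ℝ) ≤ v * ((1 + η / v) * F.card) :=
        mul_le_mul_of_nonneg_left h2 hv.le
    _ = (v + η) * F.card := by field_simp

variable [MeasurableSpace.CountablySeparated Y] [Countable G] [Infinite G]

/-- A tiling of `Y` by translates of finitely many shapes, each of whose tiles is named by a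
member of the join of the cover `U`, yields a partition refining `U`. -/
theorem exists_partition_of_tiling (μ : Measure Y) [IsProbabilityMeasure μ]
    [SMulInvariantMeasure G Y μ] {m : ℕ} [Nonempty (Fin m)] {U : Fin m → Set Y}
    (hU : ∀ i, MeasurableSet (U i))
    {ι : Type*} [Fintype ι] (x : ι → Σ F : Finset G, Finset (↥F → Fin m))
    (hx : ∀ i, (x i).2.Nonempty) {B : ι → Set Y} (hB : ∀ i, MeasurableSet (B i))
    (hBx : ∀ i, B i ⊆ covered U (x i)) (hcov : ∀ y, ∃ i, y ∈ spread (x i).1 (B i))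
    {κ : ι → ℝ} (hκ0 : ∀ i, 0 < κ i) (hκ1 : ∀ i, κ i < 1) {η : ℝ} (hη : 0 < η) :
    ∃ p : Y → Fin m, FinMeas p ∧ (∀ y, y ∈ U (p y)) ∧
      ∃ (K : Finset G) (δ : ℝ), 0 < δ ∧ ∀ F, FolnerInv K δ F →
        ent μ (fun y (s : ↥F) => p ((s : G) • y)) ≤
          ((∑ i, (-Real.log (1 - κ i) + wmass G μ (B i) *
            (Real.log (x i).2.card - Real.log (κ i)))) + η) * F.card := by
  have hne : ∀ i, Nonempty ↥(x i).2 := fun i => (hx i).to_subtype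
  have hch : ∀ i, ∃ f : Y → Option ↥(x i).2, FinMeas f ∧ (∀ y, f y = none ↔ y ∉ B i) ∧
      ∀ y b, f y = some b → ∀ s : ↥(x i).1, (s : G) • y ∈ U (b.1 s) := by
    intro i
    obtain ⟨f, hf, hf0, hf1⟩ := exists_finMeas_choice
      (A := fun b : ↥(x i).2 => B i ∩ ⋂ s : ↥(x i).1, (fun y => (s : G) • y) ⁻¹' U (b.1 s))
      fun b => (hB i).inter (MeasurableSet.iInter fun s => measurable_const_smul (s : G) (hU _))
    refine ⟨f, hf, fun y => ?_, fun y b hyb s => mem_iInter.1 (hf1 y b hyb).2 s⟩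
    rw [hf0]
    refine ⟨fun h hy => ?_, fun h b hb => h hb.1⟩
    obtain ⟨b, hb, hyb⟩ := hBx i hy
    exact h ⟨b, hb⟩ ⟨hy, mem_iInter.2 hyb⟩
  choose Qi hQm hQ0 hQ1 using hch
  let Q : Y → ∀ i, Option ↥(x i).2 := fun y i => Qi i y
  have hQ : FinMeas Q := FinMeas.pi hQm
  let q : (∀ i, Option ↥(x i).2) → ℝ := fun a => ∏ i, optWt (κ i) (a i)
  have hq : ∀ a, 0 < q a := fun a =>
    Finset.prod_pos fun i _ => optWt_pos (hκ0 i) (hκ1 i) _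
  have hq1 : ∑ a, q a ≤ 1 := by
    have h := Finset.prod_univ_sum (fun i => (Finset.univ : Finset (Option ↥(x i).2)))
      fun i o => optWt (κ i) o
    rw [Fintype.piFinset_univ] at h
    refine le_of_eq (h.symm.trans ?_)
    exact Finset.prod_eq_one fun i _ => sum_optWt _
  set v := ∑ i, (-Real.log (1 - κ i) + wmass G μ (B i) *
            (Real.log (x i).2.card - Real.log (κ i))) with hv
  have hcost := fun i => integral_wt_mul_optWt_le (G := G) μ (hκ0 i) (hκ1 i) (hQm i) (hB i)
    fun y hy => (hQ0 i y).2 hy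
  have hcostQ : ∫ y, (wt G y).toReal * -Real.log (q (Q y)) ∂μ ≤ v := by
    have h1 : ∀ y, (wt G y).toReal * -Real.log (q (Q y)) =
        ∑ i, (wt G y).toReal * -Real.log (optWt (κ i) (Qi i y)) := by
      intro y
      rw [Real.log_prod fun i _ => (optWt_pos (hκ0 i) (hκ1 i) _).ne', ← Finset.sum_neg_distrib,
        Finset.mul_sum]
    simp_rw [h1]
    rw [integral_finsetSum _ fun i _ => (hcost i).1]
    refine Finset.sum_le_sum fun i _ => ?_
    have := (hcost i).2
    rwa [Fintype.card_coe] at this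
  have hcostQ0 : 0 ≤ ∫ y, (wt G y).toReal * -Real.log (q (Q y)) ∂μ := by
    refine integral_nonneg fun y => mul_nonneg ENNReal.toReal_nonneg ?_
    rw [Real.log_prod fun i _ => (optWt_pos (hκ0 i) (hκ1 i) _).ne', ← Finset.sum_neg_distrib]
    exact Finset.sum_nonneg fun i _ => neg_log_optWt_nonneg (hκ0 i) (hκ1 i) _
  obtain ⟨K, δ, hδ, hent⟩ := exists_ent_le (G := G) μ hQ hq hq1 (half_pos hη)
  let K₁ : Finset G := insert 1 (Finset.univ.biUnion fun i => (x i).1⁻¹)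
  have hK₁ : ∀ i, ∀ s ∈ (x i).1, s⁻¹ ∈ K₁ := fun i s hs =>
    Finset.mem_insert_of_mem (Finset.mem_biUnion.2 ⟨i, Finset.mem_univ _, Finset.inv_mem_inv hs⟩)
  let valid : (↥K₁ → ∀ i, Option ↥(x i).2) → Fin m → Prop := fun ω j =>
    ∃ (i : ι) (s : ↥(x i).1) (f : ↥(x i).2), ω ⟨(s : G)⁻¹, hK₁ i s s.2⟩ i = some f ∧ f.1 s = j
  let φ : (↥K₁ → ∀ i, Option ↥(x i).2) → Fin m := fun ω =>
    if h : ∃ j, valid ω j then h.choose else Classical.arbitrary _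
  refine ⟨fun y => φ fun g : ↥K₁ => Q ((g : G) • y), ?_, ?_, ?_⟩
  · have hm : FinMeas fun y (g : ↥K₁) => Q ((g : G) • y) :=
      FinMeas.pi fun u => hQ.comp_measurable (measurable_const_smul (u : G))
    exact hm.comp φ
  · intro y
    have hex : ∃ j, valid (fun g : ↥K₁ => Q ((g : G) • y)) j := by
      obtain ⟨i, s, hs, hy⟩ := hcov y
      have h1 : Qi i (s⁻¹ • y) ≠ none := fun h => (hQ0 i _).1 h hy
      obtain ⟨f, hf⟩ := Option.ne_none_iff_exists'.1 h1
      exact ⟨f.1 ⟨s, hs⟩, i, ⟨s, hs⟩, f, hf, rfl⟩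
    have hφ : φ (fun g : ↥K₁ => Q ((g : G) • y)) = hex.choose := dif_pos hex
    obtain ⟨i, s, f, hf, hfs⟩ := hex.choose_spec
    beta_reduce
    rw [hφ, ← hfs]
    have h2 := hQ1 i _ f hf s
    rwa [smul_inv_smul] at h2
  · have h1 := exists_ent_factor_le μ hQ (Finset.mem_insert_self 1 _ : 1 ∈ K₁) φ
      (v := v + η / 2) (by linarith) (half_pos hη) ⟨K, δ, hδ, fun F hF => (hent F hF).trans
        (mul_le_mul_of_nonneg_right (by linarith) (Nat.cast_nonneg _))⟩
    rwa [add_assoc, add_halves] at h1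

end Partition

section Core

variable {G : Type*} [Group G] {Y : Type*} [MeasurableSpace Y] [MulAction G Y]

/-- Arbitrarily many shapes, each one much more invariant than the previous ones. -/
lemma exists_shapes [Infinite G] (μ : Measure Y) {m : ℕ} {U : Fin m → Set Y} {c δ : ℝ}
    (hδ : 0 < δ) (hδ1 : δ < 1)
    (hc : ∀ (K : Finset G) (δ' : ℝ), 0 < δ' → ∃ x : Σ F : Finset G, Finset (↥F → Fin m),
      FolnerInv K δ' x.1 ∧ Real.log x.2.card ≤ x.1.card * c ∧ 1 - δ ≤ μ.real (covered U x))
    (K : Finset G) (n₀ k : ℕ) :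
    ∃ x : ℕ → Σ F : Finset G, Finset (↥F → Fin m),
      (∀ i, (x i).1.Nonempty ∧ n₀ ≤ (x i).1.card ∧ (x i).2.Nonempty ∧
        Real.log (x i).2.card ≤ (x i).1.card * c ∧ 1 - δ ≤ μ.real (covered U (x i))) ∧
      ∀ i j, i < j → j < k →
        ((((x j).1⁻¹ * K * (x i).1) \ (x i).1).card : ℝ) ≤ δ * (x i).1.card := by
  obtain ⟨M, hM⟩ := Infinite.exists_subset_card_eq G n₀
  obtain ⟨f, hf, hff⟩ := exists_seq_of_forall_finset_exists
    (fun x : Σ F : Finset G, Finset (↥F → Fin m) => x.1.Nonempty ∧ n₀ ≤ x.1.card ∧ x.2.Nonempty ∧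
      Real.log x.2.card ≤ x.1.card * c ∧ 1 - δ ≤ μ.real (covered U x))
    (fun x y => (((x.1⁻¹ * K * y.1) \ y.1).card : ℝ) ≤ δ * y.1.card) (by
      intro s _
      let K' : Finset G := (s.biUnion fun x => x.1⁻¹ * K) ∪ M
      have hpos : (0 : ℝ) < K'.card + 1 := by positivity
      have hd : δ / (K'.card + 1) ≤ δ := div_le_self hδ.le (by simp)
      obtain ⟨y, hy, hy1, hy2⟩ := hc K' (δ / (K'.card + 1)) (div_pos hδ hpos)
      refine ⟨y, ⟨hy.1, ?_, ?_, hy1, hy2⟩, fun x hx => ?_⟩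
      · rw [← hM]
        exact (Finset.card_le_card Finset.subset_union_right).trans
          (card_le_of_folnerInv (hd.trans_lt hδ1) hy)
      · rw [Finset.nonempty_iff_ne_empty]
        intro h
        have : covered U y = ∅ := by
          ext z; simp [covered, h]
        rw [this, measureReal_empty] at hy2
        linarith
      · have hsub : x.1⁻¹ * K ⊆ K' := (Finset.subset_biUnion_of_mem (fun x => x.1⁻¹ * K) hx).trans
          Finset.subset_union_left
        refine (card_mul_sdiff_le (folnerInv_mono hsub le_rfl hy)).trans
          (mul_le_mul_of_nonneg_right ?_ (Nat.cast_nonneg _))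
        rw [mul_div_assoc', div_le_iff₀ hpos, mul_comm]
        have : ((x.1⁻¹ * K).card : ℝ) ≤ K'.card := by exact_mod_cast Finset.card_le_card hsub
        exact mul_le_mul_of_nonneg_left (by linarith) hδ.le)
  exact ⟨fun i => f (k - 1 - i), fun i => hf _, fun i j hij hj => hff _ _ (by omega)⟩

lemma wmass_compl_le (μ : Measure Y) [IsProbabilityMeasure μ] {V Z : Set Y} {a b : ℝ}
    (ha : 0 ≤ a)
    (hVa : ∫⁻ y in Vᶜ, wt G y ∂μ ≤ ENNReal.ofReal a) (hVZ : μ.real (V \ Z) ≤ b) :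
    wmass G μ Zᶜ ≤ a + b := by
  have h1 : ∫⁻ y in Zᶜ, wt G y ∂μ ≤ ∫⁻ y in Vᶜ, wt G y ∂μ + μ (V \ Z) := by
    have hsub : Zᶜ ⊆ Vᶜ ∪ (V \ Z) := by
      intro y hy
      by_cases h : y ∈ V
      · exact Or.inr ⟨h, hy⟩
      · exact Or.inl h
    refine (lintegral_mono_set hsub).trans ((lintegral_union_le _ _ _).trans ?_)
    gcongr
    refine (lintegral_mono fun y => wt_le_one y).trans ?_
    simp
  have h2 := ENNReal.toReal_mono (ENNReal.add_ne_top.2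
    ⟨lintegral_wt_ne_top (G := G) μ Vᶜ, measure_ne_top μ (V \ Z)⟩) h1
  rw [ENNReal.toReal_add (lintegral_wt_ne_top μ Vᶜ) (measure_ne_top _ _)] at h2
  have h3 := ENNReal.toReal_mono ENNReal.ofReal_ne_top hVa
  rw [ENNReal.toReal_ofReal ha] at h3
  exact h2.trans (add_le_add h3 hVZ)

variable [MeasurableConstSMul G Y] [MeasurableSpace.CountablySeparated Y] [Countable G]
  [Infinite G]

/-- If joins of the cover `U` over arbitrarily invariant sets can be reduced to exponential rate
`h` on large subsets of `Y`, then `U` is refined by a partition of entropy close to `h`. -/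
theorem exists_partition_ent_le (μ : Measure Y) [IsProbabilityMeasure μ]
    [SMulInvariantMeasure G Y μ] {m : ℕ} {U : Fin m → Set Y} (hU : ∀ i, MeasurableSet (U i))
    (hUcov : ∀ y, ∃ i, y ∈ U i) {h : ℝ} (h0 : 0 ≤ h)
    (hh : ∀ ε δ : ℝ, 0 < ε → 0 < δ → ∀ (K : Finset G) (δ' : ℝ), 0 < δ' →
      ∃ x : Σ F : Finset G, Finset (↥F → Fin m), FolnerInv K δ' x.1 ∧
        Real.log x.2.card ≤ x.1.card * (h + ε) ∧ 1 - δ ≤ μ.real (covered U x))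
    {η : ℝ} (hη : 0 < η) :
    ∃ p : Y → Fin m, FinMeas p ∧ (∀ y, y ∈ U (p y)) ∧
      ∃ (K : Finset G) (δ : ℝ), 0 < δ ∧ ∀ F, FolnerInv K δ F →
        ent μ (fun y (s : ↥F) => p ((s : G) • y)) ≤ (h + η) * F.card := by
  have hm : Nonempty (Fin m) := by
    obtain ⟨y⟩ := nonempty_of_isProbabilityMeasure μ
    exact ⟨(hUcov y).choose⟩
  have hm1 : (1 : ℝ) ≤ m := by exact_mod_cast Fin.pos_iff_nonempty.2 hm
  obtain ⟨ε, hε0, hε1, hεη⟩ : ∃ ε : ℝ, 0 < ε ∧ ε ≤ 1 / 2 ∧ ε * (7 + 2 * h) ≤ η / 2 := by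
    have hp : 0 < 7 + 2 * h := by linarith
    refine ⟨min (1 / 2) (η / 2 / (7 + 2 * h)), lt_min (by norm_num) (by positivity),
      min_le_left _ _, ?_⟩
    rw [← le_div_iff₀ hp]
    exact min_le_right _ _
  have hκ : ∀ a : ℝ, 0 < a → 0 < 1 - Real.exp (-a) ∧ 1 - Real.exp (-a) < 1 ∧
      -Real.log (1 - (1 - Real.exp (-a))) = a := by
    intro a ha
    refine ⟨?_, ?_, ?_⟩
    · linarith [Real.exp_lt_one_iff.2 (by linarith : -a < 0)]
    · linarith [Real.exp_pos (-a)]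
    · rw [sub_sub_cancel, Real.log_exp, neg_neg]
  obtain ⟨hκ'0, hκ'1, hκ'e⟩ := hκ ε hε0
  set κ' := 1 - Real.exp (-ε)
  set L := Real.log m - Real.log κ' with hL
  have hL0 : 0 ≤ L := sub_nonneg.2 (Real.log_le_log hκ'0 (hκ'1.le.trans hm1))
  obtain ⟨lam, hlam0, hlam1, hlamL⟩ : ∃ l : ℝ, 0 < l ∧ l ≤ 1 ∧ l * L ≤ ε := by
    refine ⟨ε / (L + 1), by positivity, ?_, ?_⟩
    · rw [div_le_one (by positivity)]; linarith
    · rw [div_mul_eq_mul_div, div_le_iff₀ (by positivity)]; nlinarith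
  obtain ⟨K, V, hV, hVinv, hVK, hVc⟩ := exists_invariant_finite_stab (G := G) μ
    (c := ENNReal.ofReal (lam / 2)) (by simpa using hlam0)
  obtain ⟨k, hk⟩ := exists_pow_lt_of_lt_one (by positivity : 0 < lam / 4)
    (by linarith : 1 - ε < 1)
  obtain ⟨hκ0, hκ1, hκe⟩ := hκ (ε / (k + 1)) (by positivity)
  set κ := 1 - Real.exp (-(ε / (k + 1)))
  obtain ⟨n₀, hn₀⟩ := exists_nat_ge (-Real.log κ / ε)
  rw [div_le_iff₀ hε0] at hn₀
  obtain ⟨x, hx, hxx⟩ := exists_shapes μ (by positivity : 0 < lam / 12) (by linarith)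
    (fun K δ' hδ' => hh ε (lam / 12) hε0 (by positivity) K δ' hδ') K n₀ k
  obtain ⟨B, hBm, hBx, hB1, hB2⟩ := exists_tiling μ hV hVinv hVK k (fun i => (x i).1)
    (fun i => covered U (x i)) (fun i _ => (hx i).1) (fun i => measurableSet_covered hU _)
    hε0 (by linarith) (by positivity) (fun i _ => (hx i).2.2.2.2) hxx
  let Z : Set Y := ⋃ i ∈ Finset.range k, spread (x i).1 (B i)
  have hZm : MeasurableSet Z :=
    Finset.measurableSet_biUnion _ fun i _ => measurableSet_spread _ (hBm i)
  have hR : wmass G μ Zᶜ ≤ lam := by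
    have h1 : lam / 12 / (1 - ε) ≤ lam / 6 := by
      rw [div_le_iff₀ (by linarith)]; nlinarith
    have h2 := wmass_compl_le (G := G) μ (by positivity) hVc
      (hB2.trans (by linarith : _ ≤ lam / 2))
    rwa [add_halves] at h2
  let x' : Option (Fin k) → Σ F : Finset G, Finset (↥F → Fin m) := fun o =>
    o.elim ⟨{1}, Finset.univ⟩ fun i => x i
  let B' : Option (Fin k) → Set Y := fun o => o.elim Zᶜ fun i => B i
  let κs : Option (Fin k) → ℝ := fun o => o.elim κ' fun _ => κ
  obtain ⟨p, hpm, hpU, Kp, δp, hδp, hp⟩ := exists_partition_of_tiling μ hU x' (B := B')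
    (κ := κs) (η := η / 2)
    (by rintro (_ | i)
        · exact Finset.univ_nonempty
        · exact (hx i).2.2.1)
    (by rintro (_ | i)
        · exact hZm.compl
        · exact hBm i)
    (by rintro (_ | i)
        · intro y _
          obtain ⟨j, hj⟩ := hUcov y
          refine ⟨fun _ => j, Finset.mem_univ _, fun s => ?_⟩
          rw [Finset.mem_singleton.1 s.2, one_smul]
          exact hj
        · exact hBx i)
    (by intro y
        by_cases hy : y ∈ Z
        · obtain ⟨i, hi, hyi⟩ := mem_iUnion₂.1 hy
          exact ⟨some ⟨i, Finset.mem_range.1 hi⟩, hyi⟩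
        · exact ⟨none, 1, Finset.mem_singleton_self _, by simpa [B'] using hy⟩)
    (by rintro (_ | i)
        · exact hκ'0
        · exact hκ0)
    (by rintro (_ | i)
        · exact hκ'1
        · exact hκ1) (half_pos hη)
  refine ⟨p, hpm, hpU, Kp, δp, hδp, fun F hF => (hp F hF).trans
    (mul_le_mul_of_nonneg_right ?_ (Nat.cast_nonneg _))⟩
  have hcard : ((Finset.univ : Finset (↥({1} : Finset G) → Fin m)).card : ℝ) = m := by
    rw [Finset.card_univ, Fintype.card_fun]; simp
  have hnone : -Real.log (1 - κ') + wmass G μ Zᶜ * L ≤ 2 * ε := by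
    have := mul_le_mul_of_nonneg_right hR hL0
    linarith
  have hsome : ∑ i : Fin k, (-Real.log (1 - κ) + wmass G μ (B i) *
      (Real.log (x i).2.card - Real.log κ)) ≤ ε + (h + 2 * ε) / (1 - ε) := by
    have h1 : ∀ i : Fin k, -Real.log (1 - κ) + wmass G μ (B i) *
        (Real.log (x i).2.card - Real.log κ) ≤
        ε / (k + 1) + (h + 2 * ε) * ((x i).1.card * wmass G μ (B i)) := by
      intro i
      have h2 : (n₀ : ℝ) ≤ (x i).1.card := by exact_mod_cast (hx i).2.1
      have h3 := (hx i).2.2.2.1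
      have h4 : Real.log (x i).2.card - Real.log κ ≤ (x i).1.card * (h + 2 * ε) := by nlinarith
      have h5 := mul_le_mul_of_nonneg_left h4 (wmass_nonneg (G := G) μ (B i))
      linarith
    refine (Finset.sum_le_sum fun i _ => h1 i).trans ?_
    rw [Finset.sum_add_distrib, ← Finset.mul_sum, Finset.sum_const, Finset.card_univ,
      Fintype.card_fin, nsmul_eq_mul,
      Fin.sum_univ_eq_sum_range fun i => ((x i).1.card : ℝ) * wmass G μ (B i)]
    refine add_le_add ?_ ?_
    · rw [mul_div_assoc', div_le_iff₀ (by positivity)]; nlinarith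
    · rw [div_eq_mul_one_div]
      refine mul_le_mul_of_nonneg_left ?_ (by linarith)
      rw [le_div_iff₀ (by linarith), mul_comm]
      exact hB1
  have hdiv : (h + 2 * ε) / (1 - ε) ≤ h + 4 * ε + 2 * h * ε := by
    rw [div_le_iff₀ (by linarith)]
    nlinarith [mul_nonneg h0 hε0.le]
  rw [Fintype.sum_option]
  simp only [x', B', κs, Option.elim, hcard]
  linarith

end Core

section Limits

variable {G : Type*} [Group G]

lemma le_invLiminf {ψ : Finset G → ℝ} {C : ℝ} (h0 : ∀ F, 0 ≤ ψ F)
    (hC : ∀ F, F.Nonempty → ψ F ≤ C * F.card) (hG : FolnerAmenable G) (K : Finset G)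
    {δ : ℝ} (hδ : 0 < δ) :
    0 ≤ invLiminf ψ ∧ invLiminf ψ ≤ C ∧
    sInf ((fun F : Finset G => ψ F / (F.card : ℝ)) '' {F : Finset G | FolnerInv K δ F}) ≤
      invLiminf ψ := by
  have h1 : ∀ (K : Finset G) (δ : {d : ℝ // 0 < d}), sInf ((fun F : Finset G =>
      ψ F / (F.card : ℝ)) '' {F : Finset G | FolnerInv K δ.1 F}) ≤ C := by
    intro K δ
    obtain ⟨F, hF⟩ := hG K δ.1 δ.2
    refine csInf_le_of_le (b := ψ F / F.card) ⟨0, ?_⟩ ⟨F, hF, rfl⟩ ?_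
    · rintro _ ⟨F, -, rfl⟩
      exact div_nonneg (h0 F) (Nat.cast_nonneg _)
    · rw [div_le_iff₀ (by exact_mod_cast hF.1.card_pos)]
      exact hC F hF.1
  have hne : Nonempty {d : ℝ // 0 < d} := ⟨⟨δ, hδ⟩⟩
  refine ⟨?_, ciSup_le fun K => ciSup_le fun δ => h1 K δ, ?_⟩
  · refine Real.iSup_nonneg fun K => Real.iSup_nonneg fun δ => Real.sInf_nonneg ?_
    rintro _ ⟨F, -, rfl⟩
    exact div_nonneg (h0 F) (Nat.cast_nonneg _)
  · refine le_trans ?_ (le_ciSup (f := fun K => ⨆ δ : {d : ℝ // 0 < d}, sInf ((fun F : Finset G =>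
      ψ F / (F.card : ℝ)) '' {F : Finset G | FolnerInv K δ.1 F})) ⟨C, ?_⟩ K)
    · refine le_ciSup (f := fun δ : {d : ℝ // 0 < d} => sInf ((fun F : Finset G =>
        ψ F / (F.card : ℝ)) '' {F : Finset G | FolnerInv K δ.1 F})) ⟨C, ?_⟩ ⟨δ, hδ⟩
      rintro _ ⟨δ, rfl⟩
      exact h1 K δ
    · rintro _ ⟨K, rfl⟩
      exact ciSup_le fun δ => h1 K δ

lemma invLimsup_nonneg {ψ : Finset G → ℝ} (h0 : ∀ F, 0 ≤ ψ F) : 0 ≤ invLimsup ψ := by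
  refine Real.iInf_nonneg fun K => Real.iInf_nonneg fun δ => Real.sSup_nonneg ?_
  rintro _ ⟨F, -, rfl⟩
  exact div_nonneg (h0 F) (Nat.cast_nonneg _)

lemma invLimsup_le {ψ : Finset G → ℝ} (h0 : ∀ F, 0 ≤ ψ F) {K : Finset G} {δ C : ℝ} (hδ : 0 < δ)
    (hC0 : 0 ≤ C) (hC : ∀ F, FolnerInv K δ F → ψ F ≤ C * F.card) : invLimsup ψ ≤ C := by
  have h1 : ∀ (K : Finset G) (δ : {d : ℝ // 0 < d}), 0 ≤ sSup ((fun F : Finset G =>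
      ψ F / (F.card : ℝ)) '' {F : Finset G | FolnerInv K δ.1 F}) := by
    refine fun K δ => Real.sSup_nonneg ?_
    rintro _ ⟨F, -, rfl⟩
    exact div_nonneg (h0 F) (Nat.cast_nonneg _)
  refine (ciInf_le ⟨0, ?_⟩ K).trans ((ciInf_le ⟨0, ?_⟩ ⟨δ, hδ⟩).trans (Real.sSup_le ?_ hC0))
  · rintro _ ⟨K, rfl⟩
    exact Real.iInf_nonneg fun δ => h1 K δ
  · rintro _ ⟨δ, rfl⟩
    exact h1 K δ
  · rintro _ ⟨F, hF, rfl⟩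
    exact div_le_of_le_mul₀ (Nat.cast_nonneg _) hC0 (hC F hF)

end Limits

section CoverNumbers

variable {G X : Type*} [Group G] [MulAction G X]

lemma exists_coverNumJoin {m : ℕ} {U : Fin m → Set X} (hUcov : (⋃ i, U i) = Set.univ)
    (F : Finset G) (D : Set X) :
    coverNumJoin U F D ≤ m ^ F.card ∧ ∃ t : Finset (↥F → Fin m), t.card = coverNumJoin U F D ∧
      D ⊆ ⋃ f ∈ t, ⋂ s : ↥F, (fun x => (s : G) • x) ⁻¹' U (f s) := by
  have huniv : D ⊆ ⋃ f ∈ (Finset.univ : Finset (↥F → Fin m)),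
      ⋂ s : ↥F, (fun x => (s : G) • x) ⁻¹' U (f s) := by
    intro x _
    have h : ∀ s : ↥F, ∃ i, (s : G) • x ∈ U i := fun s => mem_iUnion.1 (hUcov ▸ mem_univ _)
    choose f hf using h
    exact mem_iUnion₂.2 ⟨f, Finset.mem_univ _, mem_iInter.2 hf⟩
  have hne : {n : ℕ | ∃ t : Finset (↥F → Fin m), t.card = n ∧
      D ⊆ ⋃ f ∈ t, ⋂ s : ↥F, (fun x => (s : G) • x) ⁻¹' U (f s)}.Nonempty :=
    ⟨_, Finset.univ, rfl, huniv⟩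
  refine ⟨Nat.sInf_le ⟨Finset.univ, ?_, huniv⟩, Nat.sInf_mem hne⟩
  rw [Finset.card_univ, Fintype.card_fun, Fintype.card_fin, Fintype.card_coe]

lemma exists_NdeltaJoin [MeasurableSpace X] (μ : Measure X) [IsProbabilityMeasure μ] {m : ℕ}
    {U : Fin m → Set X} (hUcov : (⋃ i, U i) = Set.univ) {δ : ℝ} (hδ : 0 < δ) (F : Finset G) :
    NdeltaJoin μ U δ F ≤ m ^ F.card ∧ ∃ D : Set X, MeasurableSet D ∧ 1 - δ ≤ (μ D).toReal ∧
      NdeltaJoin μ U δ F = coverNumJoin U F D := by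
  have h1 : 1 - δ ≤ (μ Set.univ).toReal := by simpa using hδ.le
  have hmem : coverNumJoin U F Set.univ ∈ {n : ℕ | ∃ D : Set X, MeasurableSet D ∧
      1 - δ ≤ (μ D).toReal ∧ n = coverNumJoin U F D} := ⟨Set.univ, MeasurableSet.univ, h1, rfl⟩
  exact ⟨(Nat.sInf_le hmem).trans (exists_coverNumJoin hUcov F _).1, Nat.sInf_mem ⟨_, hmem⟩⟩

/-- Names witnessing the lower entropy of a cover exist over arbitrarily invariant sets. -/
lemma exists_names_of_hLowerC [MeasurableSpace X] (hG : FolnerAmenable G) (μ : Measure X)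
    [IsProbabilityMeasure μ] {m : ℕ} {U : Fin m → Set X} (hUcov : (⋃ i, U i) = Set.univ) :
    0 ≤ hLowerC G μ U ∧ ∀ ε δ : ℝ, 0 < ε → 0 < δ → ∀ (K : Finset G) (δ' : ℝ), 0 < δ' →
      ∃ (F : Finset G) (t : Finset (↥F → Fin m)), FolnerInv K δ' F ∧
        Real.log t.card ≤ F.card * (hLowerC G μ U + ε) ∧
        ∃ D : Set X, MeasurableSet D ∧ 1 - δ ≤ (μ D).toReal ∧
          D ⊆ ⋃ f ∈ t, ⋂ s : ↥F, (fun x => (s : G) • x) ⁻¹' U (f s) := by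
  have h0 : ∀ (δ : ℝ) (F : Finset G), 0 ≤ Real.log (NdeltaJoin μ U δ F) :=
    fun δ F => Real.log_natCast_nonneg _
  have hC : ∀ δ : ℝ, 0 < δ → ∀ F : Finset G, F.Nonempty →
      Real.log (NdeltaJoin μ U δ F) ≤ Real.log m * F.card := by
    intro δ hδ F _
    rcases Nat.eq_zero_or_pos (NdeltaJoin μ U δ F) with h | h
    · rw [h, Nat.cast_zero, Real.log_zero]
      exact mul_nonneg (Real.log_natCast_nonneg _) (Nat.cast_nonneg _)
    · rw [mul_comm, ← Real.log_pow]
      exact Real.log_le_log (by exact_mod_cast h)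
        (by exact_mod_cast (exists_NdeltaJoin μ hUcov hδ F).1)
  refine ⟨Real.iSup_nonneg fun δ => (le_invLiminf (h0 δ.1) (hC δ.1 δ.2) hG ∅ zero_lt_one).1, ?_⟩
  intro ε δ hε hδ K δ' hδ'
  have h1 := (le_invLiminf (h0 δ) (hC δ hδ) hG K hδ').2.2
  have h2 : invLiminf (fun F : Finset G => Real.log (NdeltaJoin μ U δ F)) ≤ hLowerC G μ U := by
    refine le_ciSup (f := fun δ : {d : ℝ // 0 < d} =>
      invLiminf (fun F : Finset G => Real.log (NdeltaJoin μ U δ.1 F))) ⟨Real.log m, ?_⟩ ⟨δ, hδ⟩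
    rintro _ ⟨δ, rfl⟩
    exact (le_invLiminf (h0 δ.1) (hC δ.1 δ.2) hG ∅ zero_lt_one).2.1
  obtain ⟨F₀, hF₀⟩ := hG K δ' hδ'
  obtain ⟨_, ⟨F, hF, rfl⟩, hlt⟩ := exists_lt_of_csInf_lt (Set.Nonempty.image _ ⟨F₀, hF₀⟩)
    ((h1.trans h2).trans_lt (lt_add_of_pos_right _ hε))
  obtain ⟨D, hD, hDδ, hND⟩ := (exists_NdeltaJoin μ hUcov hδ F).2
  obtain ⟨t, ht, hDt⟩ := (exists_coverNumJoin hUcov F D).2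
  refine ⟨F, t, hF, ?_, D, hD, hDδ, hDt⟩
  have hFpos : (0 : ℝ) < F.card := by exact_mod_cast hF.1.card_pos
  simp only [div_lt_iff₀ hFpos] at hlt
  rw [ht, ← hND, mul_comm]
  exact hlt.le

lemma HJoin_nonneg [MeasurableSpace X] (μ : Measure X) [IsProbabilityMeasure μ] {k : ℕ}
    (P : Fin k → Set X) (F : Finset G) : 0 ≤ HJoin μ P F :=
  Finset.sum_nonneg fun _ _ => Real.negMulLog_nonneg ENNReal.toReal_nonneg measureReal_le_one

lemma hPlus_le [MeasurableSpace X] (μ : Measure X) [IsProbabilityMeasure μ] {m r : ℕ}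
    {U : Fin m → Set X} {P : Fin r → Set X} (hP : IsMeasPartition P)
    (hPU : ∀ a, ∃ i, P a ⊆ U i) :
    hPlus G μ U ≤ invLimsup (fun F : Finset G => HJoin μ P F) := by
  refine csInf_le ⟨0, ?_⟩ ⟨r, P, hP, hPU, rfl⟩
  rintro _ ⟨r, P, -, -, rfl⟩
  exact invLimsup_nonneg fun F => HJoin_nonneg μ P F

end CoverNumbers

section Shift

/-- The full shift over `G` with alphabet `α`. -/
def Shift (G α : Type*) : Type _ := G → α

variable {G α : Type*}

instance [Group G] : MulAction G (Shift G α) where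
  smul s y := fun g => y (g * s)
  one_smul y := funext fun g => congrArg y (mul_one g)
  mul_smul s t y := funext fun g => congrArg y (mul_assoc g s t).symm

/-- The itinerary of a point with respect to a labelling of the space. -/
def itinerary (G : Type*) {X : Type*} [Group G] [MulAction G X] (c : X → α) (x : X) : Shift G α :=
  fun g => c (g • x)

lemma itinerary_smul {X : Type*} [Group G] [MulAction G X] (c : X → α) (s : G) (x : X) :
    itinerary G c (s • x) = s • itinerary G c x :=
  funext fun g => congrArg c (smul_smul g s x)

variable [MeasurableSpace α]

instance : MeasurableSpace (Shift G α) := inferInstanceAs (MeasurableSpace (G → α))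

instance [Countable G] [StandardBorelSpace α] : StandardBorelSpace (Shift G α) :=
  inferInstanceAs (StandardBorelSpace (G → α))

instance [Group G] : MeasurableConstSMul G (Shift G α) where
  measurable_const_smul s := measurable_pi_iff.2 fun g => measurable_pi_apply (g * s)

variable {X : Type*} [Group G] [MulAction G X] [MeasurableSpace X] [MeasurableConstSMul G X]

lemma measurable_itinerary {c : X → α} (hc : Measurable c) : Measurable (itinerary G c) :=
  measurable_pi_iff.2 fun g => hc.comp (measurable_const_smul g)

lemma smulInvariantMeasure_map (μ : Measure X) [SMulInvariantMeasure G X μ] {c : X → α}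
    (hc : Measurable c) : SMulInvariantMeasure G (Shift G α) (μ.map (itinerary G c)) where
  measure_preimage_smul s A hA := by
    have hπ := measurable_itinerary (G := G) hc
    rw [Measure.map_apply hπ (measurable_const_smul s hA), Measure.map_apply hπ hA,
      ← measure_preimage_smul μ s (itinerary G c ⁻¹' A)]
    congr 1
    ext x
    simp only [mem_preimage, itinerary_smul]

end Shift

section Main

variable {G X : Type*} [Group G] [Countable G] [Infinite G] [MulAction G X] [MeasurableSpace X]
  [MeasurableConstSMul G X]

theorem hPlus_le_hLowerC (hG : FolnerAmenable G) (μ : Measure X) [IsProbabilityMeasure μ]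
    [SMulInvariantMeasure G X μ] {m : ℕ} {U : Fin m → Set X} (hU : ∀ i, MeasurableSet (U i))
    (hUcov : (⋃ i, U i) = Set.univ) : hPlus G μ U ≤ hLowerC G μ U := by
  obtain ⟨h0, hh⟩ := exists_names_of_hLowerC hG μ hUcov
  have hm : Nonempty (Fin m) := by
    obtain ⟨x⟩ := nonempty_of_isProbabilityMeasure μ
    exact ⟨(mem_iUnion.1 (hUcov ▸ mem_univ x : x ∈ ⋃ i, U i)).choose⟩
  let c : X → Fin m → Bool := fun x i => decide (x ∈ U i)
  have hc : Measurable c := measurable_pi_iff.2 fun i => measurable_to_bool (by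
    convert hU i
    ext x; simp [c])
  let π : X → Shift G (Fin m → Bool) := itinerary G c
  have hπ : Measurable π := measurable_itinerary hc
  have hinv := smulInvariantMeasure_map (G := G) μ hc
  have hprob : IsProbabilityMeasure (μ.map π) := Measure.isProbabilityMeasure_map hπ.aemeasurable
  let U' : Fin m → Set (Shift G (Fin m → Bool)) := fun i => {y | y 1 i = true ∨ ∀ j, y 1 j = false}
  have hU' : ∀ i, MeasurableSet (U' i) := fun i =>
    (measurable_pi_apply (X := fun _ : G => Fin m → Bool) 1) (MeasurableSet.of_discrete
      (s := {a : Fin m → Bool | a i = true ∨ ∀ j, a j = false}))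
  have hU'cov : ∀ y, ∃ i, y ∈ U' i := by
    intro y
    by_cases h : ∃ i, y 1 i = true
    · exact ⟨h.choose, Or.inl h.choose_spec⟩
    · refine ⟨Classical.arbitrary _, Or.inr fun j => ?_⟩
      simpa using not_exists.1 h j
  have hπU : ∀ x i, π x ∈ U' i ↔ x ∈ U i := by
    intro x i
    have h1 : ∀ j, π x 1 j = true ↔ x ∈ U j := fun j => by
      simp [π, itinerary, c]
    refine ⟨?_, fun h => Or.inl ((h1 i).2 h)⟩
    rintro (h | h)
    · exact (h1 i).1 h
    · obtain ⟨j, hj⟩ := mem_iUnion.1 (hUcov ▸ mem_univ x : x ∈ ⋃ i, U i)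
      exact absurd ((h1 j).2 hj) (by simp [h j])
  refine le_of_forall_pos_le_add fun η hη => ?_
  obtain ⟨p, hp, hpU, K, δ, hδ, hent⟩ := exists_partition_ent_le (G := G) (μ.map π) hU' hU'cov h0
    (by
      intro ε δ hε hδ K δ' hδ'
      obtain ⟨F, t, hF, ht, D, hD, hDδ, hDt⟩ := hh ε δ hε hδ K δ' hδ'
      refine ⟨⟨F, t⟩, hF, ht, hDδ.trans ?_⟩
      rw [map_measureReal_apply hπ (measurableSet_covered hU' _)]
      refine measureReal_mono fun x hx => ?_
      obtain ⟨f, hf, hx⟩ := mem_iUnion₂.1 (hDt hx)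
      refine ⟨f, hf, fun s => ?_⟩
      rw [← itinerary_smul]
      exact (hπU _ _).2 (mem_iInter.1 hx s)) hη
  refine (hPlus_le μ (P := fun a => π ⁻¹' (p ⁻¹' {a})) ⟨fun a => hπ (hp a), ?_, ?_⟩ ?_).trans
    (invLimsup_le (HJoin_nonneg μ _) hδ (by linarith) fun F hF => le_trans (le_of_eq ?_)
      (hent F hF))
  · intro a b hab
    rw [Set.disjoint_left]
    rintro x rfl hb
    exact hab hb
  · exact eq_univ_of_forall fun x => mem_iUnion.2 ⟨p (π x), rfl⟩
  · refine fun a => ⟨a, ?_⟩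
    rintro x rfl
    exact (hπU _ _).1 (hpU _)
  · rw [HJoin, ent]
    refine Finset.sum_congr (by congr!) fun f _ => ?_
    have hm : FinMeas fun y (s : ↥F) => p ((s : G) • y) :=
      FinMeas.pi fun u => hp.comp_measurable (measurable_const_smul (u : G))
    rw [map_measureReal_apply hπ (hm f), Measure.real]
    congr 3
    ext x
    simp only [mem_iInter, mem_preimage, mem_singleton_iff, funext_iff, π, itinerary_smul]

end Main

end LocalEntropy

/-- Lemma: for a free action of a countably infinite amenable group,
`h_μ⁺(𝒰) ≤ h̲_{c,μ}(𝒰)` for every finite Borel cover `𝒰`. -/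
theorem stmt6 {G X : Type*} [Group G] [Countable G] [Infinite G]
    [TopologicalSpace X] [CompactSpace X] [T2Space X]
    [MulAction G X] [ContinuousConstSMul G X] [MeasurableSpace X] [BorelSpace X]
    (hamen : FolnerAmenable G)
    (μ : Measure X) [IsProbabilityMeasure μ] (hinv : InvariantMeasure G μ)
    (hfree : ∀ s : G, s ≠ 1 → μ {x : X | s • x = x} = 0)
    (m : ℕ) (U : Fin m → Set X) (hUmeas : ∀ i, MeasurableSet (U i))
    (hUcov : (⋃ i, U i) = Set.univ) :
    hPlus G μ U ≤ hLowerC G μ U := by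
  have : MeasurableConstSMul G X := ⟨fun s => (continuous_const_smul s).measurable⟩
  have : SMulInvariantMeasure G X μ := ⟨fun s B hB => hinv s B hB⟩
  exact LocalEntropy.hPlus_le_hLowerC hamen μ hUmeas hUcov
end

section
/- Let μ be a regular Borel probability measure on a compact Hausdorff space X and let C_1,…,C_k be closed subsets of X. Then for every k-element Borel partition 𝒫 = {P_1,…,P_k} of X with P_i ∩ C_i = ∅ for i = 1,…,k and every δ > 0 there is a k-element Borel partition 𝒬 = {Q_1,…,Q_k} of X such that Q_i ∩ C_i = ∅ and μ(∂Q_i) = 0 for i = 1,…,k, and H_μ(𝒬 | 𝒫) < δ. -/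
open MeasureTheory

/-- The conditional entropy `H_μ(𝒬 | 𝒫)` of the finite Borel partition `Q` with respect
to the finite Borel partition `P` (with the convention `0 · ln 0 = 0`, which here is
automatic since the term vanishes when `μ(Q j ∩ P i) = 0`). -/
noncomputable def partCondEntropy {X : Type*} [MeasurableSpace X] (μ : Measure X)
    {k : ℕ} (Q P : Fin k → Set X) : ℝ :=
  ∑ i : Fin k, ∑ j : Fin k,
    -((μ (Q j ∩ P i)).toReal * Real.log ((μ (Q j ∩ P i)).toReal / (μ (P i)).toReal))

/-- Between a closed set `F` and an open set `U` of a normal space there is an open set with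
null boundary. -/
theorem exists_isOpen_between_null_frontier {X : Type*} [TopologicalSpace X] [NormalSpace X]
    [MeasurableSpace X] [BorelSpace X] (μ : Measure X) [IsFiniteMeasure μ]
    {F U : Set X} (hF : IsClosed F) (hU : IsOpen U) (hFU : F ⊆ U) :
    ∃ V, IsOpen V ∧ F ⊆ V ∧ V ⊆ U ∧ μ (frontier V) = 0 := by
  obtain ⟨f, hf0, hf1, -⟩ := exists_continuous_zero_one_of_isClosed hF hU.isClosed_compl
    (Set.disjoint_compl_right_iff_subset.mpr hFU)
  have hcount : {t : ℝ | 0 < μ {x | f x = t}}.Countable :=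
    Measure.countable_meas_level_set_pos f.continuous.measurable
  obtain ⟨t, ht, htnull⟩ : ∃ t ∈ Set.Ioo (0 : ℝ) 1, t ∉ {t : ℝ | 0 < μ {x | f x = t}} := by
    by_contra! h
    exact (Cardinal.Real.Ioo_countable_iff.not.mpr (by norm_num)) (hcount.mono h)
  refine ⟨{x | f x < t}, isOpen_lt f.continuous continuous_const, fun x hx => ?_, fun x hx => ?_,
    measure_mono_null (frontier_lt_subset_eq f.continuous continuous_const) (by simpa using htnull)⟩
  · have := hf0 hx
    simp_all
  · by_contra hxU
    have h1 : f x = 1 := hf1 hxU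
    have h2 : f x < t := hx
    linarith [ht.2]

/-- The summand of conditional entropy is continuous in the measure of the intersection. -/
theorem continuous_neg_mul_log_div (p : ℝ) :
    Continuous fun q : ℝ => -(q * Real.log (q / p)) := by
  rcases eq_or_ne p 0 with rfl | hp
  · simpa using continuous_const
  · have h : (fun q : ℝ => -(q * Real.log (q / p))) = fun q => p * Real.negMulLog (q / p) := by
      ext q
      simp only [Real.negMulLog]
      field_simp
    rw [h]
    exact continuous_const.mul (Real.continuous_negMulLog.comp (continuous_id.div_const p))

/-- `H_μ(Q | P)` is small once each `P i` is nearly contained in `Q i`. -/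
theorem exists_pos_forall_partCondEntropy_lt {X : Type*} [MeasurableSpace X] (μ : Measure X)
    [IsFiniteMeasure μ] {k : ℕ} (P : Fin k → Set X) {δ : ℝ} (hδ : 0 < δ) :
    ∃ ε > 0, ∀ Q : Fin k → Set X,
      (∀ i j, |μ.real (Q j ∩ P i) - if i = j then μ.real (P i) else 0| < ε) →
      partCondEntropy μ Q P < δ := by
  let G : (Fin k → Fin k → ℝ) → ℝ := fun M =>
    ∑ i, ∑ j, -(M i j * Real.log (M i j / μ.real (P i)))
  let D : Fin k → Fin k → ℝ := fun i j => if i = j then μ.real (P i) else 0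
  have hG : Continuous G := continuous_finsetSum _ fun i _ => continuous_finsetSum _ fun j _ =>
    (continuous_neg_mul_log_div (μ.real (P i))).comp (continuous_apply_apply i j)
  have hGD : G D = 0 := by
    refine Finset.sum_eq_zero fun i _ => Finset.sum_eq_zero fun j _ => ?_
    by_cases hij : i = j
    · subst hij
      rcases eq_or_ne (μ.real (P i)) 0 with h | h <;> simp [D, h]
    · simp [D, hij]
  obtain ⟨ε, hε, h⟩ := Metric.eventually_nhds_iff.mp
    (hG.continuousAt.eventually_lt (g := fun _ => δ) continuousAt_const (hGD ▸ hδ : G D < δ))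
  refine ⟨ε, hε, fun Q hQ => h (y := fun i j => μ.real (Q j ∩ P i)) ?_⟩
  simpa only [dist_pi_lt_iff hε, Real.dist_eq] using hQ

/-- An open cover `U` of a normal space can be refined to a Borel partition with null
boundaries. -/
theorem exists_partition_subset_null_frontier {X : Type*} [TopologicalSpace X] [NormalSpace X]
    [MeasurableSpace X] [BorelSpace X] (μ : Measure X) [IsFiniteMeasure μ] {k : ℕ}
    (U : Fin k → Set X) (hU : ∀ i, IsOpen (U i)) (hcov : ⋃ i, U i = Set.univ) :
    ∃ Q : Fin k → Set X, (∀ i, MeasurableSet (Q i)) ∧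
      (Pairwise fun i j => Disjoint (Q i) (Q j)) ∧ (⋃ i, Q i) = Set.univ ∧
      (∀ i, Q i ⊆ U i) ∧ ∀ i, μ (frontier (Q i)) = 0 := by
  obtain ⟨F, hFcov, hF, hFU⟩ := exists_iUnion_eq_closed_subset hU
    (fun x => Set.toFinite _) hcov
  choose V hV hFV hVU hVnull using fun i =>
    exists_isOpen_between_null_frontier μ (hF i) (hU i) (hFU i)
  have hVcov : ⋃ i, V i = Set.univ :=
    Set.eq_univ_of_univ_subset (hFcov ▸ Set.iUnion_mono hFV)
  have hnull_sdiff : ∀ {A B : Set X}, μ (frontier A) = 0 → μ (frontier B) = 0 →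
      μ (frontier (A \ B)) = 0 := fun {A B} hA hB => by
    refine measure_mono_null (t := frontier A ∪ frontier B) ?_ (measure_union_null hA hB)
    rw [Set.sdiff_eq]
    refine (frontier_inter_subset _ _).trans ?_
    rw [frontier_compl]
    exact Set.union_subset_union Set.inter_subset_left Set.inter_subset_right
  refine ⟨disjointed V, fun i => ?_, disjoint_disjointed V, (iUnion_disjointed).trans hVcov,
    fun i => (disjointed_subset V i).trans (hVU i), fun i => ?_⟩
  · exact disjointedRec (fun {t j} h => h.diff (hV j).measurableSet) (hV i).measurableSet
  · exact disjointedRec (p := fun s => μ (frontier s) = 0)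
      (fun {t j} h => hnull_sdiff h (hVnull j)) (hVnull i)

/-- Lemma: given closed sets `C i` and a Borel partition `P` with `P i ∩ C i = ∅`, one can
find a Borel partition `Q` with `Q i ∩ C i = ∅`, `μ(∂ Q i) = 0`, and `H_μ(Q | P) < δ`. -/
theorem stmt7 {X : Type*} [TopologicalSpace X] [CompactSpace X] [T2Space X]
    [MeasurableSpace X] [BorelSpace X]
    (μ : Measure X) [IsProbabilityMeasure μ] [μ.Regular]
    (k : ℕ) (C : Fin k → Set X) (hC : ∀ i, IsClosed (C i))
    (P : Fin k → Set X) (hPmeas : ∀ i, MeasurableSet (P i))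
    (hPdisj : Pairwise fun i j => Disjoint (P i) (P j)) (hPcov : (⋃ i, P i) = Set.univ)
    (hPC : ∀ i, P i ∩ C i = ∅) (δ : ℝ) (hδ : 0 < δ) :
    ∃ Q : Fin k → Set X, (∀ i, MeasurableSet (Q i)) ∧
      (Pairwise fun i j => Disjoint (Q i) (Q j)) ∧ (⋃ i, Q i) = Set.univ ∧
      (∀ i, Q i ∩ C i = ∅) ∧ (∀ i, μ (frontier (Q i)) = 0) ∧
      partCondEntropy μ Q P < δ := by
  obtain ⟨ε, hε, hent⟩ := exists_pos_forall_partCondEntropy_lt μ P hδ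
  choose K hKP hK hKε using fun i => (hPmeas i).exists_isCompact_sdiff_lt (μ := μ)
    (measure_ne_top μ _) (ENNReal.ofReal_pos.mpr hε).ne'
  have hKreal : ∀ i, μ.real (P i \ K i) < ε := fun i =>
    ENNReal.toReal_lt_of_lt_ofReal (hKε i)
  let U : Fin k → Set X := fun i => (C i)ᶜ \ ⋃ j ∈ {j | j ≠ i}, K j
  have hU : ∀ i, IsOpen (U i) := fun i => (hC i).isOpen_compl.sdiff
    ((Set.toFinite _).isClosed_biUnion fun j _ => (hK j).isClosed)
  have hUcov : ⋃ i, U i = Set.univ := by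
    refine Set.eq_univ_of_forall fun x => ?_
    obtain ⟨i, hi⟩ := Set.mem_iUnion.mp (hPcov ▸ Set.mem_univ x)
    refine Set.mem_iUnion.mpr ⟨i, fun hxC => ?_, fun hxK => ?_⟩
    · exact (hPC i).le ⟨hi, hxC⟩
    · obtain ⟨j, hji, hxj⟩ := Set.mem_iUnion₂.mp hxK
      exact Set.disjoint_left.mp (hPdisj hji) (hKP j hxj) hi
  obtain ⟨Q, hQmeas, hQdisj, hQcov, hQU, hQnull⟩ :=
    exists_partition_subset_null_frontier μ U hU hUcov
  have hQK : ∀ {i j}, j ≠ i → Disjoint (Q i) (K j) := fun {i j} hji =>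
    Set.disjoint_left.mpr fun x hxQ hxK => (hQU i hxQ).2 (Set.mem_biUnion hji hxK)
  have hKQ : ∀ i, K i ⊆ Q i := fun i x hx => by
    obtain ⟨j, hj⟩ := Set.mem_iUnion.mp (hQcov ▸ Set.mem_univ x)
    by_cases hij : i = j
    · exact hij ▸ hj
    · exact (Set.disjoint_left.mp (hQK hij) hj hx).elim
  refine ⟨Q, hQmeas, hQdisj, hQcov, fun i => ?_, hQnull, hent Q fun i j => ?_⟩
  · exact Set.eq_empty_of_forall_notMem fun x hx => (hQU i hx.1).1 hx.2
  · refine lt_of_le_of_lt ?_ (hKreal i)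
    split_ifs with hij
    · subst hij
      have hsplit := measureReal_inter_add_sdiff (μ := μ) (s := P i) (hQmeas i)
      have hle : μ.real (P i \ Q i) ≤ μ.real (P i \ K i) :=
        measureReal_mono (Set.sdiff_subset_sdiff_right (hKQ i))
      rw [Set.inter_comm, ← hsplit, sub_add_cancel_left, abs_neg, abs_of_nonneg measureReal_nonneg]
      exact hle
    · rw [sub_zero, abs_of_nonneg measureReal_nonneg]
      exact measureReal_mono fun x hx =>
        ⟨hx.2, fun hxK => Set.disjoint_left.mp (hQK hij) hx.1 hxK⟩
end
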